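/- arXiv:2008.06719 — 3 statements merged into one kernel-verified Lean document; each statement's English description precedes it below -/
import Mathlib

section
/- Let A be a linear hyperplane arrangement in ℝ^d and a_0 = (−1)^d χ_A(0) the absolute value of the constant coefficient of its characteristic polynomial. Then for every x ∈ ℝ^d outside the set ∪_{L ∈ L(A), L ≠ {0}} L^⊥, exactly a_0 of the closed chambers C of A satisfy x ∈ C°; moreover for every x ∈ ℝ^d the number of chambers C with x ∈ C° is at least a_0. -/
open scoped RealInnerProductSpace Pointwise Classical
open Set

noncomputable section

abbrev E (d : ℕ) : Type := EuclideanSpace ℝ (Fin d)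

variable {d : ℕ}

/-- Positive hull: all finite nonnegative combinations of elements of `A`. -/
def posHull (A : Set (E d)) : Set (E d) :=
  {x | ∃ (n : ℕ) (c : Fin n → ℝ) (v : Fin n → E d),
    (∀ i, 0 ≤ c i) ∧ (∀ i, v i ∈ A) ∧ x = ∑ i, c i • v i}

/-- Dual (polar) cone. -/
def polarCone (C : Set (E d)) : Set (E d) := {z | ∀ y ∈ C, ⟪z, y⟫ ≤ 0}

/-- A polyhedral cone: finite intersection of linear closed half-spaces. -/
def IsPolyCone (C : Set (E d)) : Prop :=
  ∃ (m : ℕ) (y : Fin m → E d), C = {z | ∀ i, ⟪z, y i⟫ ≤ 0}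

/-- A polyhedral set: finite intersection of closed half-spaces. -/
def IsPolyhedron (P : Set (E d)) : Prop :=
  ∃ (m : ℕ) (y : Fin m → E d) (c : Fin m → ℝ), P = {z | ∀ i, ⟪z, y i⟫ ≤ c i}

/-- Faces of `P`: `P` itself, or intersections with supporting hyperplanes. -/
def IsFaceOf (P F : Set (E d)) : Prop :=
  F = P ∨ ∃ (y : E d) (c : ℝ), (∀ z ∈ P, ⟪y, z⟫ ≤ c) ∧ F = {z | z ∈ P ∧ ⟪y, z⟫ = c}

/-- Dimension of a set: dimension of its affine hull. -/
def sdim (F : Set (E d)) : ℕ := Module.finrank ℝ (affineSpan ℝ F).direction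

/-- The `k`-dimensional (nonempty) faces of `P`. -/
def facesOfDim (P : Set (E d)) (k : ℕ) : Set (Set (E d)) :=
  {F | IsFaceOf P F ∧ F.Nonempty ∧ sdim F = k}

/-- Tangent cone of `P` at a point `f₀`. -/
def tangentConeOf (P : Set (E d)) (f₀ : E d) : Set (E d) :=
  {u | ∃ δ : ℝ, 0 < δ ∧ f₀ + δ • u ∈ P}

/-- Normal cone of `P` at its face `F`: polar of the tangent cone at any
relative interior point of `F`. -/
def normalCone (P F : Set (E d)) : Set (E d) :=
  {z | ∀ f₀ ∈ intrinsicInterior ℝ F, ∀ u ∈ tangentConeOf P f₀, ⟪z, u⟫ ≤ 0}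

/-- `y` is a nearest point of `P` to `x`. -/
def IsNearestPt (P : Set (E d)) (x y : E d) : Prop :=
  y ∈ P ∧ ∀ z ∈ P, dist x y ≤ dist x z

/-- `dim(x,P) = k`: the metric projection of `x` onto `P` lies in the relative
interior of a `k`-dimensional face of `P`. -/
def projDimEq (P : Set (E d)) (x : E d) (k : ℕ) : Prop :=
  ∃ y F, IsNearestPt P x y ∧ IsFaceOf P F ∧ y ∈ intrinsicInterior ℝ F ∧ sdim F = k

def IsHyperplane (H : Set (E d)) : Prop :=
  ∃ (y : E d) (c : ℝ), y ≠ 0 ∧ H = {z | ⟪y, z⟫ = c}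

def IsLinearHyperplane (H : Set (E d)) : Prop :=
  ∃ y : E d, y ≠ 0 ∧ H = {z | ⟪y, z⟫ = 0}

/-- Closed chambers of the complement of the set `S`. -/
def IsChamberOfUnion (S P : Set (E d)) : Prop :=
  ∃ x : E d, x ∉ S ∧ P = closure (connectedComponentIn Sᶜ x)

/-- Closed chambers of the hyperplane arrangement `A`. -/
def IsChamber (A : Finset (Set (E d))) (P : Set (E d)) : Prop :=
  IsChamberOfUnion (⋃ H ∈ A, H) P

/-- Intersection of a finite subcollection of hyperplanes (`⊤` for `∅`). -/
def interSet (B : Finset (Set (E d))) : Set (E d) := ⋂ H ∈ B, H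

/-- The unsigned coefficient `a_k` of the characteristic polynomial:
`χ_A(t) = Σ_k (-1)^(d-k) a_k t^k` via Whitney's formula. -/
def charCoeff (A : Finset (Set (E d))) (k : ℕ) : ℤ :=
  (-1 : ℤ) ^ (d - k) *
    ∑ B ∈ A.powerset,
      if (interSet B).Nonempty ∧ sdim (interSet B) = k then (-1 : ℤ) ^ B.card else 0

/-- Relatively open cell of the family of functionals `y i`, `i ∈ S`, in the subspace `V`,
with positive set `T`. -/
def cellOf (y : Set (E d) → E d) (V : Submodule ℝ (E d)) (S T : Finset (Set (E d))) :
    Set (E d) :=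
  {z | z ∈ V ∧ ∀ i ∈ S, if i ∈ T then 0 < ⟪y i, z⟫ else ⟪y i, z⟫ < 0}

def goodSet (x : E d) (C : Set (E d)) : Prop := C.Nonempty ∧ ¬ ∃ z ∈ C, 0 < ⟪x, z⟫

def cellCount (y : Set (E d) → E d) (x : E d) (V : Submodule ℝ (E d))
    (S : Finset (Set (E d))) : ℤ :=
  ∑ T ∈ S.powerset, if goodSet x (cellOf y V S T) then 1 else 0

def whit (y : Set (E d) → E d) (V : Submodule ℝ (E d)) (S : Finset (Set (E d))) : ℤ :=
  ∑ B ∈ S.powerset,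
    if (∀ z ∈ V, (∀ i ∈ B, ⟪y i, z⟫ = 0) → z = 0) then (-1 : ℤ) ^ B.card else 0

def restr (y : E d) (V : Submodule ℝ (E d)) : Submodule ℝ (E d) :=
  V ⊓ LinearMap.ker (innerₛₗ ℝ y)

lemma mem_restr {y : E d} {V : Submodule ℝ (E d)} {z : E d} :
    z ∈ restr y V ↔ z ∈ V ∧ ⟪y, z⟫ = 0 := by
  simp [restr]

lemma finrank_restr {y : E d} {V : Submodule ℝ (E d)} (h : ∃ v ∈ V, ⟪y, v⟫ ≠ 0) :
    Module.finrank ℝ (restr y V) + 1 = Module.finrank ℝ V := by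
  obtain ⟨v, hv, hne⟩ := h
  set f : Module.Dual ℝ V := (innerₛₗ ℝ y).domRestrict V with hf
  have hf0 : f ≠ 0 := by
    intro h0
    apply hne
    have := congrArg (fun g => g ⟨v, hv⟩) h0
    simpa [hf] using this
  rw [← Module.Dual.finrank_ker_add_one_of_ne_zero hf0]
  congr 1
  have : restr y V = (LinearMap.ker f).map V.subtype := by
    ext z
    simp [mem_restr, hf, and_comm]
  rw [this]
  exact Submodule.finrank_map_subtype_eq V _

lemma cell_perturb (y : Set (E d) → E d) (V : Submodule ℝ (E d)) (S T : Finset (Set (E d)))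
    {z v : E d} (hz : z ∈ cellOf y V S T) (hv : v ∈ V) :
    ∀ᶠ t : ℝ in nhds 0, z + t • v ∈ cellOf y V S T := by
  have h : ∀ᶠ t : ℝ in nhds 0, ∀ i ∈ S,
      if i ∈ T then 0 < ⟪y i, z + t • v⟫ else ⟪y i, z + t • v⟫ < 0 := by
    rw [Filter.eventually_all_finset]
    intro i hi
    have hc : ContinuousAt (fun t : ℝ => ⟪y i, z + t • v⟫) 0 := by fun_prop
    have h1 := hz.2 i hi
    split_ifs at h1 ⊢
    · exact hc.eventually (lt_mem_nhds (by simpa using h1))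
    · exact hc.eventually (gt_mem_nhds (by simpa using h1))
  filter_upwards [h] with t ht
  exact ⟨V.add_mem hz.1 (V.smul_mem t hv), ht⟩

lemma cell_convex (y : Set (E d) → E d) (V : Submodule ℝ (E d)) (S T : Finset (Set (E d))) :
    Convex ℝ (cellOf y V S T) := by
  intro a ha b hb s t hs ht hst
  refine ⟨V.add_mem (V.smul_mem s ha.1) (V.smul_mem t hb.1), fun i hi => ?_⟩
  have h1 := ha.2 i hi
  have h2 := hb.2 i hi
  simp only [inner_add_right, inner_smul_right]
  split_ifs at h1 h2 ⊢
  · rcases hs.eq_or_lt with h | h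
    · have : t = 1 := by linarith
      subst this; subst h; simpa using h2
    · have := mul_pos h h1
      have := mul_nonneg ht h2.le
      linarith
  · rcases hs.eq_or_lt with h | h
    · have : t = 1 := by linarith
      subst this; subst h; simpa using h2
    · have := mul_neg_of_pos_of_neg h h1
      have := mul_nonpos_of_nonneg_of_nonpos ht h2.le
      linarith

/-- perturbing a zero of `f` to both sides -/
lemma perturb_sides (y : Set (E d) → E d) (V : Submodule ℝ (E d)) (S T : Finset (Set (E d)))
    (f : E d) (U : Set (E d)) (hU : IsOpen U)
    (hf : ∃ v ∈ V, ⟪f, v⟫ ≠ 0) (h : ∃ z ∈ cellOf y V S T, ⟪f, z⟫ = 0 ∧ z ∈ U) :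
    (∃ z ∈ cellOf y V S T, 0 < ⟪f, z⟫ ∧ z ∈ U) ∧ (∃ z ∈ cellOf y V S T, ⟪f, z⟫ < 0 ∧ z ∈ U) := by
  obtain ⟨z, hz, hz0, hzU⟩ := h
  have key : ∀ v ∈ V, ∃ t : ℝ, 0 < t ∧ z + t • v ∈ cellOf y V S T ∧ z + t • v ∈ U := by
    intro v hv
    have hc : ContinuousAt (fun t : ℝ => z + t • v) 0 := by fun_prop
    have h2 := hc.eventually (hU.mem_nhds (by simpa using hzU))
    have h3 := (cell_perturb y V S T hz hv).and h2
    have h4 : ∀ᶠ t : ℝ in nhdsWithin 0 (Ioi 0), _ := h3.filter_mono nhdsWithin_le_nhds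
    obtain ⟨t, ht, ht0⟩ := (h4.and self_mem_nhdsWithin).exists
    exact ⟨t, ht0, ht.1, ht.2⟩
  obtain ⟨v, hv, hne⟩ := hf
  obtain ⟨w, hw, hpos⟩ : ∃ w ∈ V, 0 < ⟪f, w⟫ := by
    rcases lt_or_gt_of_ne hne with h | h
    · exact ⟨-v, V.neg_mem hv, by simpa using h⟩
    · exact ⟨v, hv, h⟩
  obtain ⟨t, ht, h1, h2⟩ := key w hw
  obtain ⟨s, hs, h3, h4⟩ := key (-w) (V.neg_mem hw)
  refine ⟨⟨_, h1, ?_, h2⟩, ⟨_, h3, ?_, h4⟩⟩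
  · rw [inner_add_right, inner_smul_right, hz0]
    have := mul_pos ht hpos
    linarith
  · rw [inner_add_right, inner_smul_right, hz0, inner_neg_right]
    have := mul_pos hs hpos
    linarith

lemma cross_zero (C U : Set (E d)) (hC : Convex ℝ C) (hU : Convex ℝ U) (f : E d)
    (h1 : ∃ z ∈ C, 0 < ⟪f, z⟫ ∧ z ∈ U) (h2 : ∃ z ∈ C, ⟪f, z⟫ < 0 ∧ z ∈ U) :
    ∃ z ∈ C, ⟪f, z⟫ = 0 ∧ z ∈ U := by
  obtain ⟨a, ha, hap, haU⟩ := h1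
  obtain ⟨b, hb, hbn, hbU⟩ := h2
  set p := ⟪f, a⟫ with hp
  set q := ⟪f, b⟫ with hq
  have hpq : 0 < p - q := by linarith
  have e1 : 0 ≤ (-q) / (p - q) := div_nonneg (by linarith) hpq.le
  have e2 : 0 ≤ p / (p - q) := div_nonneg (by linarith) hpq.le
  have e3 : (-q) / (p - q) + p / (p - q) = 1 := by field_simp; ring
  refine ⟨_, hC ha hb e1 e2 e3, ?_, hU haU hbU e1 e2 e3⟩
  rw [inner_add_right, inner_smul_right, inner_smul_right, ← hp, ← hq]
  field_simp; ring

lemma cell_insert_pos (y : Set (E d) → E d) (V : Submodule ℝ (E d))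
    {S T : Finset (Set (E d))} {i : Set (E d)} (hi : i ∉ S) :
    cellOf y V (insert i S) (insert i T) = {z | z ∈ cellOf y V S T ∧ 0 < ⟪y i, z⟫} := by
  ext z
  simp only [cellOf, Set.mem_ofPred_eq, Finset.forall_mem_insert]
  simp only [Finset.mem_insert, true_or, if_true]
  have : ∀ j ∈ S, (j = i ∨ j ∈ T ↔ j ∈ T) := fun j hj =>
    ⟨fun h => h.resolve_left (fun e => hi (e ▸ hj)), Or.inr⟩
  constructor
  · rintro ⟨a, b, c⟩
    exact ⟨⟨a, fun j hj => by simpa only [this j hj] using c j hj⟩, b⟩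
  · rintro ⟨⟨a, c⟩, b⟩
    exact ⟨a, b, fun j hj => by simpa only [this j hj] using c j hj⟩

lemma cell_insert_neg (y : Set (E d) → E d) (V : Submodule ℝ (E d))
    {S T : Finset (Set (E d))} {i : Set (E d)} (hi : i ∉ T) :
    cellOf y V (insert i S) T = {z | z ∈ cellOf y V S T ∧ ⟪y i, z⟫ < 0} := by
  ext z
  simp only [cellOf, Set.mem_ofPred_eq, Finset.forall_mem_insert, hi, if_false]
  tauto

lemma cell_restr (y : Set (E d) → E d) (V : Submodule ℝ (E d))
    {S T : Finset (Set (E d))} (f : E d) :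
    cellOf y (restr f V) S T = {z | z ∈ cellOf y V S T ∧ ⟪f, z⟫ = 0} := by
  ext z
  simp only [cellOf, Set.mem_ofPred_eq, mem_restr]
  tauto

lemma good_step (y : Set (E d) → E d) (x : E d) (V : Submodule ℝ (E d))
    (S T : Finset (Set (E d))) (f : E d) (hf : ∃ v ∈ V, ⟪f, v⟫ ≠ 0) :
    ((if goodSet x {z | z ∈ cellOf y V S T ∧ ⟪f, z⟫ < 0} then 1 else 0 : ℤ) +
      (if goodSet x {z | z ∈ cellOf y V S T ∧ 0 < ⟪f, z⟫} then 1 else 0)) =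
    (if goodSet x (cellOf y V S T) then 1 else 0) +
      (if goodSet x {z | z ∈ cellOf y V S T ∧ ⟪f, z⟫ = 0} then 1 else 0) := by
  set C := cellOf y V S T with hC
  have hconv : Convex ℝ C := cell_convex y V S T
  have hUo : IsOpen {z : E d | 0 < ⟪x, z⟫} := isOpen_lt (by fun_prop) (by fun_prop)
  have hUc : Convex ℝ {z : E d | 0 < ⟪x, z⟫} :=
    convex_halfSpace_gt (innerₛₗ ℝ x).isLinear 0
  have p1 := perturb_sides y V S T f _ hUo hf
  have p2 := perturb_sides y V S T f _ isOpen_univ hf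
  have c1 := cross_zero C _ hconv hUc f
  have c2 := cross_zero C _ hconv convex_univ f
  rw [← hC] at p1 p2
  simp only [Set.mem_univ, and_true, Set.mem_ofPred_eq] at p1 p2 c1 c2
  have n1 : C.Nonempty ↔ (∃ z ∈ C, 0 < ⟪f, z⟫) ∨ (∃ z ∈ C, ⟪f, z⟫ < 0) ∨
      (∃ z ∈ C, ⟪f, z⟫ = 0) := by
    constructor
    · rintro ⟨z, hz⟩
      rcases lt_trichotomy 0 ⟪f, z⟫ with h | h | h
      · exact Or.inl ⟨z, hz, h⟩
      · exact Or.inr (Or.inr ⟨z, hz, h.symm⟩)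
      · exact Or.inr (Or.inl ⟨z, hz, h⟩)
    · rintro (⟨z, hz, _⟩ | ⟨z, hz, _⟩ | ⟨z, hz, _⟩) <;> exact ⟨z, hz⟩
  have n2 : (∃ z ∈ C, 0 < ⟪x, z⟫) ↔ (∃ z ∈ C, 0 < ⟪f, z⟫ ∧ 0 < ⟪x, z⟫) ∨
      (∃ z ∈ C, ⟪f, z⟫ < 0 ∧ 0 < ⟪x, z⟫) ∨ (∃ z ∈ C, ⟪f, z⟫ = 0 ∧ 0 < ⟪x, z⟫) := by
    constructor
    · rintro ⟨z, hz, hx⟩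
      rcases lt_trichotomy 0 ⟪f, z⟫ with h | h | h
      · exact Or.inl ⟨z, hz, h, hx⟩
      · exact Or.inr (Or.inr ⟨z, hz, h.symm, hx⟩)
      · exact Or.inr (Or.inl ⟨z, hz, h, hx⟩)
    · rintro (⟨z, hz, _, hx⟩ | ⟨z, hz, _, hx⟩ | ⟨z, hz, _, hx⟩) <;> exact ⟨z, hz, hx⟩
  have i1 : (∃ z ∈ C, 0 < ⟪f, z⟫ ∧ 0 < ⟪x, z⟫) → (∃ z ∈ C, 0 < ⟪f, z⟫) :=
    fun ⟨z, a, b, _⟩ => ⟨z, a, b⟩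
  have i2 : (∃ z ∈ C, ⟪f, z⟫ < 0 ∧ 0 < ⟪x, z⟫) → (∃ z ∈ C, ⟪f, z⟫ < 0) :=
    fun ⟨z, a, b, _⟩ => ⟨z, a, b⟩
  have i3 : (∃ z ∈ C, ⟪f, z⟫ = 0 ∧ 0 < ⟪x, z⟫) → (∃ z ∈ C, ⟪f, z⟫ = 0) :=
    fun ⟨z, a, b, _⟩ => ⟨z, a, b⟩
  have g1 : goodSet x {z | z ∈ C ∧ ⟪f, z⟫ < 0} ↔
      (∃ z ∈ C, ⟪f, z⟫ < 0) ∧ ¬ (∃ z ∈ C, ⟪f, z⟫ < 0 ∧ 0 < ⟪x, z⟫) := by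
    simp only [goodSet, Set.Nonempty, Set.mem_ofPred_eq, and_assoc]
  have g2 : goodSet x {z | z ∈ C ∧ 0 < ⟪f, z⟫} ↔
      (∃ z ∈ C, 0 < ⟪f, z⟫) ∧ ¬ (∃ z ∈ C, 0 < ⟪f, z⟫ ∧ 0 < ⟪x, z⟫) := by
    simp only [goodSet, Set.Nonempty, Set.mem_ofPred_eq, and_assoc]
  have g3 : goodSet x {z | z ∈ C ∧ ⟪f, z⟫ = 0} ↔
      (∃ z ∈ C, ⟪f, z⟫ = 0) ∧ ¬ (∃ z ∈ C, ⟪f, z⟫ = 0 ∧ 0 < ⟪x, z⟫) := by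
    simp only [goodSet, Set.Nonempty, Set.mem_ofPred_eq, and_assoc]
  have g4 : goodSet x C ↔ C.Nonempty ∧ ¬ (∃ z ∈ C, 0 < ⟪x, z⟫) := Iff.rfl
  rw [n1, n2] at g4
  clear n1 n2
  generalize goodSet x {z | z ∈ C ∧ ⟪f, z⟫ < 0} = G1 at *
  generalize goodSet x {z | z ∈ C ∧ 0 < ⟪f, z⟫} = G2 at *
  generalize goodSet x {z | z ∈ C ∧ ⟪f, z⟫ = 0} = G3 at *
  generalize goodSet x C = G4 at *
  generalize (∃ z ∈ C, 0 < ⟪f, z⟫ ∧ 0 < ⟪x, z⟫) = P1 at *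
  generalize (∃ z ∈ C, ⟪f, z⟫ < 0 ∧ 0 < ⟪x, z⟫) = P2 at *
  generalize (∃ z ∈ C, ⟪f, z⟫ = 0 ∧ 0 < ⟪x, z⟫) = P3 at *
  generalize (∃ z ∈ C, 0 < ⟪f, z⟫) = Q1 at *
  generalize (∃ z ∈ C, ⟪f, z⟫ < 0) = Q2 at *
  generalize (∃ z ∈ C, ⟪f, z⟫ = 0) = Q3 at *
  clear hconv hUo hUc hf hC
  by_cases P1 <;> by_cases P2 <;> by_cases P3 <;> by_cases Q1 <;> by_cases Q2 <;>
    by_cases Q3 <;> simp_all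

lemma count_insert (y : Set (E d) → E d) (x : E d) (V : Submodule ℝ (E d))
    (S : Finset (Set (E d))) (i : Set (E d)) (hi : i ∉ S) (hf : ∃ v ∈ V, ⟪y i, v⟫ ≠ 0) :
    cellCount y x V (insert i S) = cellCount y x V S + cellCount y x (restr (y i) V) S := by
  unfold cellCount
  rw [Finset.sum_powerset_insert hi, ← Finset.sum_add_distrib, ← Finset.sum_add_distrib]
  refine Finset.sum_congr rfl fun T hT => ?_
  have hiT : i ∉ T := fun h => hi (Finset.mem_powerset.1 hT h)
  rw [cell_insert_pos y V hi, cell_insert_neg y V hiT, cell_restr]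
  exact good_step y x V S T (y i) hf

lemma count_insert_zero (y : Set (E d) → E d) (x : E d) (V : Submodule ℝ (E d))
    (S : Finset (Set (E d))) (i : Set (E d)) (hf : ∀ v ∈ V, ⟪y i, v⟫ = 0) :
    cellCount y x V (insert i S) = 0 := by
  unfold cellCount
  refine Finset.sum_eq_zero fun T _ => if_neg ?_
  rintro ⟨⟨z, hz, h⟩, _⟩
  have := h i (Finset.mem_insert_self _ _)
  rw [hf z hz] at this
  simp at this

lemma whit_insert (y : Set (E d) → E d) (V : Submodule ℝ (E d))
    (S : Finset (Set (E d))) (i : Set (E d)) (hi : i ∉ S) :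
    whit y V (insert i S) = whit y V S - whit y (restr (y i) V) S := by
  unfold whit
  rw [Finset.sum_powerset_insert hi, sub_eq_add_neg, ← Finset.sum_neg_distrib]
  congr 1
  refine Finset.sum_congr rfl fun B hB => ?_
  have hiB : i ∉ B := fun h => hi (Finset.mem_powerset.1 hB h)
  rw [Finset.card_insert_of_notMem hiB]
  simp only [Finset.forall_mem_insert, mem_restr, and_imp, pow_succ]
  split_ifs <;> simp

lemma whit_insert_zero (y : Set (E d) → E d) (V : Submodule ℝ (E d))
    (S : Finset (Set (E d))) (i : Set (E d)) (hi : i ∉ S) (hf : ∀ v ∈ V, ⟪y i, v⟫ = 0) :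
    whit y V (insert i S) = 0 := by
  rw [whit_insert y V S i hi]
  have : restr (y i) V = V := by
    ext z; rw [mem_restr]; exact ⟨fun h => h.1, fun h => ⟨h, hf z h⟩⟩
  rw [this, sub_self]

lemma main_ind (y : Set (E d) → E d) (x : E d) (S : Finset (Set (E d))) :
    ∀ V : Submodule ℝ (E d),
      ((-1) ^ Module.finrank ℝ V * whit y V S ≤ cellCount y x V S) ∧
      ((∀ B ⊆ S, (∃ z ∈ V, (∀ i ∈ B, ⟪y i, z⟫ = 0) ∧ z ≠ 0) →
          ∃ z ∈ V, (∀ i ∈ B, ⟪y i, z⟫ = 0) ∧ ⟪x, z⟫ ≠ 0) →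
        cellCount y x V S = (-1) ^ Module.finrank ℝ V * whit y V S) := by
  induction S using Finset.induction_on with
  | empty =>
    intro V
    have hc : cellOf y V ∅ ∅ = (V : Set (E d)) := by ext; simp [cellOf]
    by_cases hV : V = ⊥
    · subst hV
      have hw : whit y (⊥ : Submodule ℝ (E d)) ∅ = 1 := by simp [whit]
      have hcc : cellCount y x (⊥ : Submodule ℝ (E d)) ∅ = 1 := by
        simp only [cellCount, Finset.powerset_empty, Finset.sum_singleton, hc]
        rw [if_pos]
        simp [goodSet]
      simp [hw, hcc]
    · obtain ⟨v, hv, hv0⟩ := V.ne_bot_iff.1 hV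
      have hw : whit y V ∅ = 0 := by
        simp only [whit, Finset.powerset_empty, Finset.sum_singleton]
        rw [if_neg]
        intro h
        exact hv0 (h v hv (by simp))
      rw [hw, mul_zero]
      constructor
      · simp only [cellCount, Finset.powerset_empty, Finset.sum_singleton]
        split_ifs <;> simp
      · intro h
        obtain ⟨z, hz, _, hne⟩ := h ∅ (by simp) ⟨v, hv, by simp, hv0⟩
        simp only [cellCount, Finset.powerset_empty, Finset.sum_singleton, hc]
        rw [if_neg]
        rintro ⟨_, h⟩
        apply h
        rcases lt_or_gt_of_ne hne with h | h
        · exact ⟨-z, V.neg_mem hz, by simpa using h⟩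
        · exact ⟨z, hz, h⟩
  | insert i S hi ih =>
    intro V
    by_cases hf : ∃ v ∈ V, ⟪y i, v⟫ ≠ 0
    · rw [count_insert y x V S i hi hf, whit_insert y V S i hi]
      have e : (-1 : ℤ) ^ Module.finrank ℝ V * (whit y V S - whit y (restr (y i) V) S) =
          (-1) ^ Module.finrank ℝ V * whit y V S +
          (-1) ^ Module.finrank ℝ (restr (y i) V) * whit y (restr (y i) V) S := by
        rw [← finrank_restr hf]; ring
      rw [e]
      refine ⟨add_le_add (ih V).1 (ih _).1, fun h => ?_⟩
      rw [(ih V).2 fun B hB => h B (hB.trans (Finset.subset_insert _ _)), (ih (restr (y i) V)).2]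
      intro B hB
      have := h (insert i B) (Finset.insert_subset_insert _ hB)
      simpa only [Finset.forall_mem_insert, mem_restr, and_assoc] using this
    · push Not at hf
      rw [count_insert_zero y x V S i hf, whit_insert_zero y V S i hi hf]
      simp

lemma same_sign {K : Set (E d)} (hK : IsPreconnected K) (f : E d) (h0 : ∀ z ∈ K, ⟪f, z⟫ ≠ 0)
    {a b : E d} (ha : a ∈ K) (hb : b ∈ K) (h : 0 < ⟪f, a⟫) : 0 < ⟪f, b⟫ := by
  by_contra hb'
  have hI := hK.intermediate_value hb ha
    (f := fun z => ⟪f, z⟫) (by fun_prop)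
  obtain ⟨z, hz, hz0⟩ := hI (show (0 : ℝ) ∈ _ from ⟨not_lt.1 hb', h.le⟩)
  exact h0 z hz hz0

lemma component_eq (A : Finset (Set (E d))) (y : Set (E d) → E d)
    (hy : ∀ H ∈ A, H = {z | ⟪y H, z⟫ = 0}) {T : Finset (Set (E d))} {p : E d}
    (hp : p ∈ cellOf y ⊤ A T) :
    p ∉ (⋃ H ∈ A, H) ∧ connectedComponentIn (⋃ H ∈ A, H)ᶜ p = cellOf y ⊤ A T := by
  have hU : ∀ z : E d, z ∈ (⋃ H ∈ A, H)ᶜ ↔ ∀ H ∈ A, ⟪y H, z⟫ ≠ 0 := by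
    intro z
    simp only [Set.mem_compl_iff, Set.mem_iUnion, not_exists]
    refine forall₂_congr fun H hH => ?_
    have : z ∈ H ↔ ⟪y H, z⟫ = 0 := by
      constructor
      · intro h; rw [hy H hH] at h; exact h
      · intro h; rw [hy H hH]; exact h
    rw [this]
  have hsub : cellOf y ⊤ A T ⊆ (⋃ H ∈ A, H)ᶜ := by
    intro z hz
    rw [hU]
    intro H hH
    have := hz.2 H hH
    split_ifs at this
    · exact this.ne'
    · exact this.ne
  refine ⟨hsub hp, Set.Subset.antisymm ?_ ?_⟩
  · intro z hz
    have hpre := isPreconnected_connectedComponentIn (F := (⋃ H ∈ A, H)ᶜ) (x := p)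
    have hpm := mem_connectedComponentIn (hsub hp)
    have hss := connectedComponentIn_subset (⋃ H ∈ A, H)ᶜ p
    refine ⟨trivial, fun H hH => ?_⟩
    have h0 : ∀ w ∈ connectedComponentIn (⋃ H ∈ A, H)ᶜ p, ⟪y H, w⟫ ≠ 0 :=
      fun w hw => (hU w).1 (hss hw) H hH
    have h1 := hp.2 H hH
    split_ifs at h1 ⊢
    · exact same_sign hpre _ h0 hpm hz h1
    · have := same_sign hpre (-(y H)) (fun w hw => by simpa using h0 w hw) hpm hz (by simpa using h1)
      simpa using this
  · exact (cell_convex y ⊤ A T).isPreconnected.subset_connectedComponentIn hp hsub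

lemma ncard_eq (A : Finset (Set (E d))) (y : Set (E d) → E d)
    (hy : ∀ H ∈ A, H = {z | ⟪y H, z⟫ = 0}) (x : E d) :
    (Set.ncard {C : Set (E d) | IsChamber A C ∧ x ∈ polarCone C} : ℤ) = cellCount y x ⊤ A := by
  have hset : {C : Set (E d) | IsChamber A C ∧ x ∈ polarCone C} =
      (fun T => closure (cellOf y ⊤ A T)) ''
        (A.powerset.filter fun T => goodSet x (cellOf y ⊤ A T) : Finset _) := by
    have hpol : ∀ C : Set (E d), x ∈ polarCone (closure C) ↔ ¬ ∃ z ∈ C, 0 < ⟪x, z⟫ := by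
      intro C
      push Not
      constructor
      · intro h z hz; exact h z (subset_closure hz)
      · intro h z hz
        exact closure_minimal (t := {z : E d | ⟪x, z⟫ ≤ 0}) h
          (isClosed_le (by fun_prop) (by fun_prop)) hz
    ext C
    simp only [Set.mem_ofPred_eq, Set.mem_image, Finset.coe_filter, Finset.mem_powerset]
    constructor
    · rintro ⟨⟨p, hp, rfl⟩, hx⟩
      have hpc : p ∈ cellOf y ⊤ A (A.filter fun H => 0 < ⟪y H, p⟫) := by
        refine ⟨trivial, fun H hH => ?_⟩
        have hne : ⟪y H, p⟫ ≠ 0 := by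
          intro h
          apply hp
          simp only [Set.mem_iUnion]
          exact ⟨H, hH, by rw [hy H hH]; exact h⟩
        simp only [Finset.mem_filter, hH, true_and]
        split_ifs with h
        · exact h
        · exact lt_of_le_of_ne (not_lt.1 h) hne
      have := (component_eq A y hy hpc).2
      rw [this] at hx ⊢
      exact ⟨_, ⟨Finset.filter_subset _ _, ⟨p, hpc⟩, (hpol _).1 hx⟩, rfl⟩
    · rintro ⟨T, ⟨hT, ⟨p, hp⟩, hg⟩, rfl⟩
      obtain ⟨h1, h2⟩ := component_eq A y hy hp
      exact ⟨⟨p, h1, by rw [h2]⟩, (hpol _).2 hg⟩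
  have hinj : Set.InjOn (fun T => closure (cellOf y ⊤ A T))
      (A.powerset.filter fun T => goodSet x (cellOf y ⊤ A T) : Finset _) := by
    have key : ∀ T T' : Finset (Set (E d)), T ⊆ A → (cellOf y ⊤ A T).Nonempty →
        closure (cellOf y ⊤ A T) = closure (cellOf y ⊤ A T') → T ⊆ T' := by
      rintro T T' hT ⟨p, hp⟩ he H hH
      by_contra hH'
      have h1 : p ∈ closure (cellOf y ⊤ A T') := he ▸ subset_closure hp
      have h2 : ⟪y H, p⟫ ≤ 0 := by
        refine closure_minimal (t := {z : E d | ⟪y H, z⟫ ≤ 0}) ?_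
          (isClosed_le (by fun_prop) (by fun_prop)) h1
        intro z hz
        have := hz.2 H (hT hH)
        rw [if_neg hH'] at this
        exact this.le
      have h3 := hp.2 H (hT hH)
      rw [if_pos hH] at h3
      linarith
    intro T hT T' hT' he
    simp only [Finset.coe_filter, Finset.mem_powerset, Set.mem_ofPred_eq] at hT hT'
    exact Finset.Subset.antisymm (key T T' hT.1 hT.2.1 he) (key T' T hT'.1 hT'.2.1 he.symm)
  rw [hset, hinj.ncard_image, Set.ncard_coe_finset, cellCount, Finset.card_filter]
  push_cast
  rfl

lemma mem_interSet (A : Finset (Set (E d))) (y : Set (E d) → E d)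
    (hy : ∀ H ∈ A, H = {z | ⟪y H, z⟫ = 0}) {B : Finset (Set (E d))} (hB : B ⊆ A) (z : E d) :
    z ∈ interSet B ↔ ∀ H ∈ B, ⟪y H, z⟫ = 0 := by
  simp only [interSet, Set.mem_iInter]
  refine forall₂_congr fun H hH => ?_
  constructor
  · intro h; rw [hy H (hB hH)] at h; exact h
  · intro h; rw [hy H (hB hH)]; exact h

lemma interSet_zero_iff (A : Finset (Set (E d))) (y : Set (E d) → E d)
    (hy : ∀ H ∈ A, H = {z | ⟪y H, z⟫ = 0}) {B : Finset (Set (E d))} (hB : B ⊆ A) :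
    ((interSet B).Nonempty ∧ sdim (interSet B) = 0) ↔
      ∀ z ∈ (⊤ : Submodule ℝ (E d)), (∀ i ∈ B, ⟪y i, z⟫ = 0) → z = 0 := by
  have hm := mem_interSet A y hy hB
  have h0 : (0 : E d) ∈ interSet B := by rw [hm]; simp
  constructor
  · rintro ⟨_, h⟩ z _ hz
    have h1 : (affineSpan ℝ (interSet B)).direction = ⊥ := Submodule.finrank_eq_zero.1 h
    have h2 : z -ᵥ (0 : E d) ∈ (affineSpan ℝ (interSet B)).direction :=
      AffineSubspace.vsub_mem_direction (subset_affineSpan ℝ _ ((hm z).2 hz))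
        (subset_affineSpan ℝ _ h0)
    rw [h1] at h2
    simpa using h2
  · intro h
    have : interSet B = {0} := by
      ext z
      rw [hm, Set.mem_singleton_iff]
      exact ⟨h z trivial, fun h => by simp [h]⟩
    rw [this]
    refine ⟨by simp, ?_⟩
    simp [sdim, direction_affineSpan]

lemma charCoeff_eq (A : Finset (Set (E d))) (y : Set (E d) → E d)
    (hy : ∀ H ∈ A, H = {z | ⟪y H, z⟫ = 0}) :
    charCoeff A 0 = (-1) ^ Module.finrank ℝ (⊤ : Submodule ℝ (E d)) * whit y ⊤ A := by
  unfold charCoeff whit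
  rw [finrank_top, finrank_euclideanSpace_fin, Nat.sub_zero]
  congr 1
  refine Finset.sum_congr rfl fun B hB => ?_
  simp only [interSet_zero_iff A y hy (Finset.mem_powerset.1 hB)]

/-- for a linear arrangement, outside `∪_{L ∈ L(A), L ≠ {0}} L^⊥`
exactly `a_0` chambers `C` satisfy `x ∈ C°`; and always at least `a_0`. -/
theorem stmt10 {d : ℕ} (A : Finset (Set (E d)))
    (hA : ∀ H ∈ A, IsLinearHyperplane H) :
    (∀ x : E d,
      x ∉ {y : E d | ∃ B ∈ A.powerset, interSet B ≠ ({0} : Set (E d)) ∧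
            y ∈ ((Submodule.span ℝ (interSet B))ᗮ : Submodule ℝ (E d))} →
      (Set.ncard {C : Set (E d) | IsChamber A C ∧ x ∈ polarCone C} : ℤ) = charCoeff A 0) ∧
    ∀ x : E d,
      charCoeff A 0 ≤ (Set.ncard {C : Set (E d) | IsChamber A C ∧ x ∈ polarCone C} : ℤ) := by
  have hex : ∀ H : Set (E d), ∃ v : E d, H ∈ A → H = {z | ⟪v, z⟫ = 0} := by
    intro H
    by_cases h : H ∈ A
    · obtain ⟨v, _, hv⟩ := hA H h
      exact ⟨v, fun _ => hv⟩
    · exact ⟨0, fun h' => absurd h' h⟩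
  choose y hy using hex
  constructor
  · intro x hx
    rw [ncard_eq A y hy x, charCoeff_eq A y hy]
    refine (main_ind y x A ⊤).2 fun B hB => ?_
    rintro ⟨z, -, hz, hz0⟩
    by_contra hcon
    push Not at hcon
    have hm := mem_interSet A y hy hB
    refine hx ⟨B, Finset.mem_powerset.2 hB, ?_, ?_⟩
    · intro h
      have : z ∈ interSet B := (hm z).2 hz
      rw [h] at this
      exact hz0 this
    · rw [Submodule.mem_orthogonal']
      intro u hu
      induction hu using Submodule.span_induction with
      | mem w hw => exact hcon w trivial ((hm w).1 hw)
      | zero => simp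
      | add a b _ _ ha hb => rw [inner_add_right, ha, hb, add_zero]
      | smul c a _ ha => rw [inner_smul_right, ha, mul_zero]
  · intro x
    rw [ncard_eq A y hy x, charCoeff_eq A y hy]
    exact (main_ind y x A ⊤).1
end
end

section
/- Let A be a linear hyperplane arrangement in ℝ^d, ξ a random vector with a rotationally invariant distribution on ℝ^d assigning zero probability to every proper linear subspace. Then for each k ∈ {0,…,d}, Σ_{C ∈ R(A)} ν_k(C) = a_k, where ν_k(C) = P[dim(ξ, C) = k] is the k-th conic intrinsic volume of the chamber C and a_k is the absolute value of the k-th coefficient of χ_A. (Klivans–Swartz formula.) -/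
open scoped RealInnerProductSpace Pointwise Classical
open Set

noncomputable section

variable {d : ℕ}

def Lf {ι : Type*} (h : ι → E d) (B : Finset ι) : Submodule ℝ (E d) where
  carrier := {z | ∀ i ∈ B, ⟪h i, z⟫ = 0}
  add_mem' := by
    intro a b ha hb i hi
    rw [inner_add_right, ha i hi, hb i hi, add_zero]
  zero_mem' := by intro i _; simp
  smul_mem' := by
    intro c a ha i hi
    rw [inner_smul_right, ha i hi, mul_zero]

lemma mem_Lf {ι : Type*} (h : ι → E d) (B : Finset ι) (z : E d) :
    z ∈ Lf h B ↔ ∀ i ∈ B, ⟪h i, z⟫ = 0 := Iff.rfl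

def sg {ι : Type*} (P : Finset ι) (i : ι) : ℝ := if i ∈ P then 1 else -1

def Ur {ι : Type*} (h : ι → E d) (A P : Finset ι) : Set (E d) :=
  {z | ∀ i ∈ A, 0 < sg P i * ⟪h i, z⟫}

def Cr {ι : Type*} (h : ι → E d) (A P : Finset ι) : Set (E d) :=
  {z | ∀ i ∈ A, 0 ≤ sg P i * ⟪h i, z⟫}

def GoodS (x : E d) (D : Set (E d)) : Prop := D.Nonempty ∧ ∀ z ∈ D, ⟪x, z⟫ ≤ 0

lemma Ur_isOpen {ι : Type*} (h : ι → E d) (A P : Finset ι) : IsOpen (Ur h A P) := by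
  have : Ur h A P = ⋂ i ∈ A, {z | 0 < sg P i * ⟪h i, z⟫} := by
    ext z; simp [Ur]
  rw [this]
  apply isOpen_biInter_finset
  intro i _
  exact isOpen_lt continuous_const (by fun_prop)

lemma Ur_convex {ι : Type*} (h : ι → E d) (A P : Finset ι) : Convex ℝ (Ur h A P) := by
  intro x hx y hy a b ha hb hab i hi
  have h1 := hx i hi
  have h2 := hy i hi
  rw [inner_add_right, inner_smul_right, inner_smul_right]
  have : sg P i * (a * ⟪h i, x⟫ + b * ⟪h i, y⟫)
    = a * (sg P i * ⟪h i, x⟫) + b * (sg P i * ⟪h i, y⟫) := by ring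
  rw [this]
  rcases ha.eq_or_lt with h0 | h0
  · have hb1 : b = 1 := by linarith
    rw [← h0, hb1]; linarith
  · have := mul_pos h0 h1
    have := mul_nonneg hb h2.le
    linarith

/-- moving a little stays in an open set -/
lemma open_move {U : Set (E d)} (hU : IsOpen U) {z : E d} (hz : z ∈ U) (v : E d) :
    ∃ δ : ℝ, 0 < δ ∧ ∀ t : ℝ, |t| < δ → z + t • v ∈ U := by
  have hc : Continuous (fun t : ℝ => z + t • v) := by fun_prop
  have : (fun t : ℝ => z + t • v) ⁻¹' U ∈ nhds (0 : ℝ) :=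
    (hU.preimage hc).mem_nhds (by simpa using hz)
  obtain ⟨δ, hδ, hb⟩ := Metric.mem_nhds_iff.1 this
  refine ⟨δ, hδ, fun t ht => hb ?_⟩
  simpa [Metric.mem_ball, Real.dist_eq] using ht

lemma nonpos_of_small {a b δ : ℝ} (hδ : 0 < δ) (H : ∀ t, 0 < t → t < δ → a + t * b ≤ 0) :
    a ≤ 0 := by
  by_contra hc
  push Not at hc
  have hb : 0 < |b| + 1 := by positivity
  set t := min (δ / 2) (a / (2 * (|b| + 1))) with ht
  have ht0 : 0 < t := by positivity
  have h1 := H t ht0 (lt_of_le_of_lt (min_le_left _ _) (by linarith))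
  have h2 : t * (2 * (|b| + 1)) ≤ a := by
    rw [← le_div_iff₀ (by positivity)]; exact min_le_right _ _
  have h3 : -|b| ≤ b := neg_abs_le b
  nlinarith

lemma cell (x a : E d) (U : Set (E d)) (hU : IsOpen U) (hc : Convex ℝ U)
    (V : Submodule ℝ (E d)) (ha : ∃ v ∈ V, ⟪a, v⟫ ≠ 0) :
    (if GoodS x {z | z ∈ V ∧ z ∈ U ∧ 0 < ⟪a, z⟫} then (1 : ℤ) else 0)
      + (if GoodS x {z | z ∈ V ∧ z ∈ U ∧ ⟪a, z⟫ < 0} then (1 : ℤ) else 0)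
    = (if GoodS x {z | z ∈ V ∧ z ∈ U} then (1 : ℤ) else 0)
      + (if GoodS x {z | z ∈ V ∧ z ∈ U ∧ ⟪a, z⟫ = 0} then (1 : ℤ) else 0) := by
  have ⟨v, hvV, hv⟩ : ∃ v ∈ V, 0 < ⟪a, v⟫ := by
    obtain ⟨v, hv, h0⟩ := ha
    rcases lt_or_gt_of_ne h0 with h | h
    · exact ⟨-v, V.neg_mem hv, by rw [inner_neg_right]; linarith⟩
    · exact ⟨v, hv, h⟩
  -- crossing
  have cross : ∀ z1 z2, z1 ∈ V → z1 ∈ U → 0 < ⟪a, z1⟫ → z2 ∈ V → z2 ∈ U → ⟪a, z2⟫ < 0 →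
      ∃ s t : ℝ, 0 < s ∧ 0 < t ∧ (s • z1 + t • z2) ∈ V ∧ (s • z1 + t • z2) ∈ U ∧
        ⟪a, s • z1 + t • z2⟫ = 0 := by
    intro z1 z2 h1 h1' h1'' h2 h2' h2''
    have hD : 0 < ⟪a, z1⟫ - ⟪a, z2⟫ := by linarith
    refine ⟨-⟪a, z2⟫ / (⟪a, z1⟫ - ⟪a, z2⟫), ⟪a, z1⟫ / (⟪a, z1⟫ - ⟪a, z2⟫),
      div_pos (by linarith) hD, div_pos h1'' hD, ?_, ?_, ?_⟩
    · exact V.add_mem (V.smul_mem _ h1) (V.smul_mem _ h2)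
    · exact hc h1' h2' (div_pos (by linarith) hD).le (div_pos h1'' hD).le (by field_simp; ring)
    · rw [inner_add_right, inner_smul_right, inner_smul_right]
      field_simp
      ring
  by_cases h0 : ∃ z, z ∈ V ∧ z ∈ U ∧ ⟪a, z⟫ = 0
  · obtain ⟨z0, hz0V, hz0U, hz0⟩ := h0
    have n1 : {z | z ∈ V ∧ z ∈ U ∧ 0 < ⟪a, z⟫}.Nonempty := by
      obtain ⟨δ, hδ, H⟩ := open_move hU hz0U v
      refine ⟨z0 + (δ/2) • v, V.add_mem hz0V (V.smul_mem _ hvV), H _ ?_, ?_⟩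
      · rw [abs_of_pos (by linarith)]; linarith
      · rw [inner_add_right, inner_smul_right, hz0]; positivity
    have n2 : {z | z ∈ V ∧ z ∈ U ∧ ⟪a, z⟫ < 0}.Nonempty := by
      obtain ⟨δ, hδ, H⟩ := open_move hU hz0U v
      refine ⟨z0 + (-(δ/2)) • v, V.add_mem hz0V (V.smul_mem _ hvV), H _ ?_, ?_⟩
      · rw [abs_neg, abs_of_pos (by linarith)]; linarith
      · rw [inner_add_right, inner_smul_right, hz0]
        have : 0 < δ / 2 * ⟪a, v⟫ := by positivity
        linarith
    have n3 : {z | z ∈ V ∧ z ∈ U}.Nonempty := ⟨z0, hz0V, hz0U⟩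
    have n4 : {z | z ∈ V ∧ z ∈ U ∧ ⟪a, z⟫ = 0}.Nonempty := ⟨z0, hz0V, hz0U, hz0⟩
    simp only [GoodS, n1, n2, n3, n4, true_and]
    have i1 : (∀ z ∈ {z | z ∈ V ∧ z ∈ U ∧ 0 < ⟪a, z⟫}, ⟪x, z⟫ ≤ 0) →
        (∀ z ∈ {z | z ∈ V ∧ z ∈ U ∧ ⟪a, z⟫ = 0}, ⟪x, z⟫ ≤ 0) := by
      rintro H z ⟨hzV, hzU, hz⟩
      obtain ⟨δ, hδ, M⟩ := open_move hU hzU v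
      apply nonpos_of_small hδ (b := ⟪x, v⟫)
      intro t ht ht'
      have := H (z + t • v) ⟨V.add_mem hzV (V.smul_mem _ hvV), M t (by rwa [abs_of_pos ht]), by
        rw [inner_add_right, inner_smul_right, hz]; positivity⟩
      rwa [inner_add_right, inner_smul_right] at this
    have i2 : (∀ z ∈ {z | z ∈ V ∧ z ∈ U ∧ ⟪a, z⟫ < 0}, ⟪x, z⟫ ≤ 0) →
        (∀ z ∈ {z | z ∈ V ∧ z ∈ U ∧ ⟪a, z⟫ = 0}, ⟪x, z⟫ ≤ 0) := by
      rintro H z ⟨hzV, hzU, hz⟩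
      obtain ⟨δ, hδ, M⟩ := open_move hU hzU v
      apply nonpos_of_small hδ (b := -⟪x, v⟫)
      intro t ht ht'
      have := H (z + (-t) • v) ⟨V.add_mem hzV (V.smul_mem _ hvV),
        M (-t) (by rwa [abs_neg, abs_of_pos ht]), by
          rw [inner_add_right, inner_smul_right, hz]
          have := mul_pos ht hv
          linarith⟩
      rw [inner_add_right, inner_smul_right] at this
      linarith
    have i3 : (∀ z ∈ {z | z ∈ V ∧ z ∈ U}, ⟪x, z⟫ ≤ 0) ↔
        (∀ z ∈ {z | z ∈ V ∧ z ∈ U ∧ 0 < ⟪a, z⟫}, ⟪x, z⟫ ≤ 0) ∧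
        (∀ z ∈ {z | z ∈ V ∧ z ∈ U ∧ ⟪a, z⟫ < 0}, ⟪x, z⟫ ≤ 0) := by
      constructor
      · exact fun H => ⟨fun z hz => H z ⟨hz.1, hz.2.1⟩, fun z hz => H z ⟨hz.1, hz.2.1⟩⟩
      · rintro ⟨H1, H2⟩ z ⟨hz, hz'⟩
        rcases lt_trichotomy (⟪a, z⟫ : ℝ) 0 with h | h | h
        · exact H2 z ⟨hz, hz', h⟩
        · exact i1 H1 z ⟨hz, hz', h⟩
        · exact H1 z ⟨hz, hz', h⟩
    have i4 : (∀ z ∈ {z | z ∈ V ∧ z ∈ U ∧ ⟪a, z⟫ = 0}, ⟪x, z⟫ ≤ 0) →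
        (∀ z ∈ {z | z ∈ V ∧ z ∈ U ∧ 0 < ⟪a, z⟫}, ⟪x, z⟫ ≤ 0) ∨
        (∀ z ∈ {z | z ∈ V ∧ z ∈ U ∧ ⟪a, z⟫ < 0}, ⟪x, z⟫ ≤ 0) := by
      intro H
      by_contra hcon
      push Not at hcon
      obtain ⟨⟨z1, hz1, p1⟩, ⟨z2, hz2, p2⟩⟩ := hcon
      obtain ⟨s, t, hs, ht, q1, q2, q3⟩ :=
        cross z1 z2 hz1.1 hz1.2.1 hz1.2.2 hz2.1 hz2.2.1 hz2.2.2
      have := H _ ⟨q1, q2, q3⟩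
      rw [inner_add_right, inner_smul_right, inner_smul_right] at this
      have := mul_pos hs p1
      have := mul_pos ht p2
      linarith
    rw [i3]
    generalize (∀ z ∈ {z | z ∈ V ∧ z ∈ U ∧ 0 < ⟪a, z⟫}, ⟪x, z⟫ ≤ 0) = p at *
    generalize (∀ z ∈ {z | z ∈ V ∧ z ∈ U ∧ ⟪a, z⟫ < 0}, ⟪x, z⟫ ≤ 0) = q at *
    generalize (∀ z ∈ {z | z ∈ V ∧ z ∈ U ∧ ⟪a, z⟫ = 0}, ⟪x, z⟫ ≤ 0) = r at *
    by_cases p <;> by_cases q <;> by_cases r <;> simp_all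
  · have e4 : {z | z ∈ V ∧ z ∈ U ∧ ⟪a, z⟫ = 0} = ∅ := by
      ext z; simp only [mem_ofPred_eq, mem_empty_iff_false, iff_false]
      exact fun hz => h0 ⟨z, hz⟩
    have g : ¬ GoodS x (∅ : Set (E d)) := fun H => by simpa using H.1
    rw [e4, if_neg g]
    by_cases h1 : ∃ z, z ∈ V ∧ z ∈ U ∧ 0 < ⟪a, z⟫
    · have e2 : {z | z ∈ V ∧ z ∈ U ∧ ⟪a, z⟫ < 0} = ∅ := by
        ext z; simp only [mem_ofPred_eq, mem_empty_iff_false, iff_false]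
        rintro ⟨p1, p2, p3⟩
        obtain ⟨w, q1, q2, q3⟩ := h1
        obtain ⟨s, t, -, -, r⟩ := cross w z q1 q2 q3 p1 p2 p3
        exact h0 ⟨_, r⟩
      have e1 : {z | z ∈ V ∧ z ∈ U ∧ 0 < ⟪a, z⟫} = {z | z ∈ V ∧ z ∈ U} := by
        ext z; constructor
        · exact fun hz => ⟨hz.1, hz.2.1⟩
        · rintro ⟨p1, p2⟩
          refine ⟨p1, p2, ?_⟩
          rcases lt_trichotomy (⟪a, z⟫ : ℝ) 0 with h | h | h
          · have : z ∈ {z | z ∈ V ∧ z ∈ U ∧ ⟪a, z⟫ < 0} := ⟨p1, p2, h⟩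
            rw [e2] at this; exact this.elim
          · exact (h0 ⟨z, p1, p2, h⟩).elim
          · exact h
      rw [e2, e1, if_neg g]
    · have e2 : {z | z ∈ V ∧ z ∈ U ∧ 0 < ⟪a, z⟫} = ∅ := by
        ext z; simp only [mem_ofPred_eq, mem_empty_iff_false, iff_false]
        exact fun hz => h1 ⟨z, hz⟩
      have e1 : {z | z ∈ V ∧ z ∈ U ∧ ⟪a, z⟫ < 0} = {z | z ∈ V ∧ z ∈ U} := by
        ext z; constructor
        · exact fun hz => ⟨hz.1, hz.2.1⟩
        · rintro ⟨p1, p2⟩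
          refine ⟨p1, p2, ?_⟩
          rcases lt_trichotomy (⟪a, z⟫ : ℝ) 0 with h | h | h
          · exact h
          · exact (h0 ⟨z, p1, p2, h⟩).elim
          · exact (h1 ⟨z, p1, p2, h⟩).elim
      rw [e2, e1, if_neg g]
      ring

lemma finrank_cut {ι : Type*} (V : Submodule ℝ (E d)) (b : E d) (hz : ∃ v ∈ V, ⟪b, v⟫ ≠ 0)
    (h : ι → E d) {a : ι} (hb : h a = b) :
    Module.finrank ℝ V = Module.finrank ℝ (V ⊓ Lf h {a} : Submodule ℝ (E d)) + 1 := by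
  set f : V →ₗ[ℝ] ℝ := (innerₛₗ ℝ b).comp V.subtype with hf
  have hne : f ≠ 0 := by
    obtain ⟨v, hv, h0⟩ := hz
    intro e
    apply h0
    have := congrArg (fun g => g ⟨v, hv⟩) e
    simpa [hf] using this
  have h1 := Module.Dual.finrank_ker_add_one_of_ne_zero hne
  rw [← h1]
  congr 1
  rw [← Submodule.finrank_map_subtype_eq]
  suffices e : Submodule.map V.subtype f.ker = V ⊓ Lf h {a} by rw [e]
  ext z
  simp only [Submodule.mem_map, LinearMap.mem_ker, Submodule.mem_inf, mem_Lf, Finset.mem_singleton,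
    forall_eq, hb]
  constructor
  · rintro ⟨y, hy, rfl⟩
    exact ⟨y.2, by simpa [hf] using hy⟩
  · rintro ⟨h1, h2⟩
    exact ⟨⟨z, h1⟩, by simpa [hf] using h2, rfl⟩

lemma Ur_insert_pos {ι : Type*} (h : ι → E d) {A P : Finset ι} {a : ι} (ha : a ∉ A) (z : E d) :
    z ∈ Ur h (insert a A) (insert a P) ↔ z ∈ Ur h A P ∧ 0 < ⟪h a, z⟫ := by
  simp only [Ur, mem_ofPred_eq, Finset.forall_mem_insert]
  have : ∀ i ∈ A, sg (insert a P) i = sg P i := by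
    intro i hi
    have : i ≠ a := fun e => ha (e ▸ hi)
    simp [sg, this]
  constructor
  · rintro ⟨h1, h2⟩
    refine ⟨fun i hi => by rw [← this i hi]; exact h2 i hi, by simpa [sg] using h1⟩
  · rintro ⟨h1, h2⟩
    refine ⟨by simpa [sg] using h2, fun i hi => by rw [this i hi]; exact h1 i hi⟩

lemma Ur_insert_neg {ι : Type*} (h : ι → E d) {A P : Finset ι} {a : ι} (ha : a ∉ P) (z : E d) :
    z ∈ Ur h (insert a A) P ↔ z ∈ Ur h A P ∧ ⟪h a, z⟫ < 0 := by
  simp only [Ur, mem_ofPred_eq, Finset.forall_mem_insert]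
  rw [and_comm]
  simp [sg, ha]

lemma core {ι : Type*} (h : ι → E d) (x : E d) (A : Finset ι) : ∀ V : Submodule ℝ (E d),
    ∑ P ∈ A.powerset, (if GoodS x {z | z ∈ V ∧ z ∈ Ur h A P} then (1 : ℤ) else 0)
    = ∑ B ∈ A.powerset, if (∀ z ∈ V ⊓ Lf h B, ⟪x, z⟫ = 0) then
        (-1 : ℤ) ^ (B.card + Module.finrank ℝ V + Module.finrank ℝ (V ⊓ Lf h B : Submodule ℝ (E d)))
        else 0 := by
  induction A using Finset.induction_on with
  | empty =>
    intro V
    have e : V ⊓ Lf h ∅ = V := by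
      ext z; simp [mem_Lf]
    simp only [Finset.powerset_empty, Finset.sum_singleton, e]
    have : GoodS x {z | z ∈ V ∧ z ∈ Ur h ∅ ∅} ↔ ∀ z ∈ V, ⟪x, z⟫ = 0 := by
      simp only [GoodS, Ur, mem_ofPred_eq, Finset.notMem_empty, false_imp_iff, implies_true, and_true]
      constructor
      · rintro ⟨-, H⟩ z hz
        have h1 := H z hz
        have h2 := H (-z) (V.neg_mem hz)
        rw [inner_neg_right] at h2
        linarith
      · intro H
        exact ⟨⟨0, V.zero_mem⟩, fun z hz => (H z hz).le⟩
    simp only [this]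
    congr 1
    rw [e]
    simp
  | insert a A ha ih =>
    intro V
    rw [Finset.sum_powerset_insert ha, Finset.sum_powerset_insert ha]
    have hP : ∀ P ∈ A.powerset, a ∉ P := fun P hP h' => ha (Finset.mem_powerset.1 hP h')
    have hL : ∀ B, V ⊓ Lf h (insert a B) = (V ⊓ Lf h {a}) ⊓ Lf h B := by
      intro B; ext z
      simp [mem_Lf, and_assoc]
    by_cases hz : ∃ v ∈ V, ⟪h a, v⟫ ≠ 0
    · have hfr : Module.finrank ℝ V = Module.finrank ℝ (V ⊓ Lf h {a} : Submodule ℝ (E d)) + 1 := by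
        exact finrank_cut V (h a) hz h rfl
      have h2 : ∑ B ∈ A.powerset, (if (∀ z ∈ V ⊓ Lf h (insert a B), ⟪x, z⟫ = 0) then
        (-1 : ℤ) ^ ((insert a B).card + Module.finrank ℝ V +
          Module.finrank ℝ (V ⊓ Lf h (insert a B) : Submodule ℝ (E d))) else 0) =
          ∑ P ∈ A.powerset, (if GoodS x {z | z ∈ V ⊓ Lf h {a} ∧ z ∈ Ur h A P} then (1 : ℤ) else 0) := by
        rw [ih (V ⊓ Lf h {a})]
        apply Finset.sum_congr rfl
        intro B hB
        rw [hL, Finset.card_insert_of_notMem (hP B hB), hfr]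
        congr 1
        ring
      rw [h2, ← ih V, ← Finset.sum_add_distrib, ← Finset.sum_add_distrib]
      apply Finset.sum_congr rfl
      intro P hPA
      have := cell x (h a) (Ur h A P) (Ur_isOpen h A P) (Ur_convex h A P) V hz
      simp only [Ur_insert_pos h ha, Ur_insert_neg h (hP P hPA)]
      rw [add_comm, this]
      congr 3
      ext z
      simp only [mem_ofPred_eq, Submodule.mem_inf, mem_Lf, Finset.mem_singleton, forall_eq]
      tauto
    · push Not at hz
      have e1 : ∀ B, V ⊓ Lf h (insert a B) = V ⊓ Lf h B := by
        intro B; ext z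
        simp only [Submodule.mem_inf, mem_Lf, Finset.forall_mem_insert]
        constructor
        · tauto
        · exact fun ⟨p, q⟩ => ⟨p, hz z p, q⟩
      rw [← Finset.sum_add_distrib, ← Finset.sum_add_distrib, Finset.sum_eq_zero, Finset.sum_eq_zero]
      · intro B hB
        rw [e1, Finset.card_insert_of_notMem (hP B hB)]
        split_ifs
        · ring
        · ring
      · intro P hPA
        rw [if_neg, if_neg, add_zero]
        · rintro ⟨⟨z, p, q⟩, -⟩
          rw [Ur_insert_pos h ha, hz z p] at q
          exact lt_irrefl _ q.2
        · rintro ⟨⟨z, p, q⟩, -⟩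
          rw [Ur_insert_neg h (hP P hPA), hz z p] at q
          exact lt_irrefl _ q.2

def Zs {ι : Type*} (h : ι → E d) (A : Finset ι) (y : E d) : Finset ι :=
  A.filter (fun i => ⟪h i, y⟫ = 0)

lemma mem_Zs {ι : Type*} (h : ι → E d) (A : Finset ι) (y : E d) (i : ι) :
    i ∈ Zs h A y ↔ i ∈ A ∧ ⟪h i, y⟫ = 0 := by simp [Zs]

lemma Cr_isClosed {ι : Type*} (h : ι → E d) (A P : Finset ι) : IsClosed (Cr h A P) := by
  have : Cr h A P = ⋂ i ∈ A, {z | 0 ≤ sg P i * ⟪h i, z⟫} := by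
    ext z; simp [Cr]
  rw [this]
  apply isClosed_biInter
  intro i _
  exact isClosed_le continuous_const (by fun_prop)

lemma Cr_add {ι : Type*} (h : ι → E d) (A P : Finset ι) {x y : E d} (hx : x ∈ Cr h A P)
    (hy : y ∈ Cr h A P) {a b : ℝ} (ha : 0 ≤ a) (hb : 0 ≤ b) : a • x + b • y ∈ Cr h A P := by
  intro i hi
  have h1 := hx i hi
  have h2 := hy i hi
  rw [inner_add_right, inner_smul_right, inner_smul_right]
  have : sg P i * (a * ⟪h i, x⟫ + b * ⟪h i, y⟫)
    = a * (sg P i * ⟪h i, x⟫) + b * (sg P i * ⟪h i, y⟫) := by ring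
  rw [this]
  positivity

lemma Cr_convex {ι : Type*} (h : ι → E d) (A P : Finset ι) : Convex ℝ (Cr h A P) :=
  fun _ hx _ hy _ _ ha hb _ => Cr_add h A P hx hy ha hb

lemma Ur_sub_Cr {ι : Type*} (h : ι → E d) (A P : Finset ι) : Ur h A P ⊆ Cr h A P :=
  fun _ hz i hi => (hz i hi).le

lemma Cr_add_Ur {ι : Type*} (h : ι → E d) (A P : Finset ι) {x y : E d} (hx : x ∈ Cr h A P)
    (hy : y ∈ Ur h A P) {t : ℝ} (ht : 0 < t) : x + t • y ∈ Ur h A P := by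
  intro i hi
  have h1 := hx i hi
  have h2 := hy i hi
  rw [inner_add_right, inner_smul_right]
  have : sg P i * (⟪h i, x⟫ + t * ⟪h i, y⟫)
    = (sg P i * ⟪h i, x⟫) + t * (sg P i * ⟪h i, y⟫) := by ring
  rw [this]
  positivity

lemma sg_ne {ι : Type*} (P : Finset ι) (i : ι) : sg P i ≠ 0 := by
  unfold sg; split_ifs <;> norm_num

lemma mem_Ur_off {ι : Type*} (h : ι → E d) (A P : Finset ι) {y : E d} (hy : y ∈ Cr h A P) :
    y ∈ Ur h (A \ Zs h A y) P := by
  intro i hi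
  rw [Finset.mem_sdiff, mem_Zs] at hi
  refine lt_of_le_of_ne (hy i hi.1) (Ne.symm (mul_ne_zero (sg_ne P i) fun e => hi.2 ⟨hi.1, e⟩))

lemma Cr_of_split {ι : Type*} (h : ι → E d) (A P T : Finset ι) {z : E d}
    (h1 : z ∈ Ur h (A \ T) P) (h2 : z ∈ Cr h T P) : z ∈ Cr h A P := by
  intro i hi
  by_cases hT : i ∈ T
  · exact h2 i hT
  · exact (h1 i (Finset.mem_sdiff.2 ⟨hi, hT⟩)).le

lemma Ur_of_split {ι : Type*} (h : ι → E d) (A P T : Finset ι) {z : E d}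
    (h1 : z ∈ Ur h (A \ T) P) (h2 : z ∈ Ur h T P) : z ∈ Ur h A P := by
  intro i hi
  by_cases hT : i ∈ T
  · exact h2 i hT
  · exact (h1 i (Finset.mem_sdiff.2 ⟨hi, hT⟩))

lemma Lf_sub_Cr {ι : Type*} (h : ι → E d) (P T : Finset ι) {z : E d} (hz : z ∈ Lf h T) :
    z ∈ Cr h T P := by
  intro i hi
  rw [hz i hi, mul_zero]

lemma self_mem_Lf {ι : Type*} (h : ι → E d) (A : Finset ι) (y : E d) : y ∈ Lf h (Zs h A y) := by
  intro i hi
  exact ((mem_Zs h A y i).1 hi).2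

/-- Points of `L(y)` close to `y` are in the cone. -/
lemma move_L {ι : Type*} (h : ι → E d) (A P : Finset ι) {y : E d} (hy : y ∈ Cr h A P)
    {v : E d} (hv : v ∈ Lf h (Zs h A y)) :
    ∃ δ : ℝ, 0 < δ ∧ ∀ t : ℝ, |t| < δ → y + t • v ∈ Cr h A P ∧ y + t • v ∈ Lf h (Zs h A y) := by
  obtain ⟨δ, hδ, H⟩ := open_move (Ur_isOpen h (A \ Zs h A y) P) (mem_Ur_off h A P hy) v
  refine ⟨δ, hδ, fun t ht => ?_⟩
  have := (Lf h (Zs h A y)).add_mem (self_mem_Lf h A y) ((Lf h (Zs h A y)).smul_mem t hv)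
  exact ⟨Cr_of_split h A P _ (H t ht) (Lf_sub_Cr h P _ this), this⟩

def faceAt {ι : Type*} (h : ι → E d) (A P : Finset ι) (y : E d) : Set (E d) :=
  {z | z ∈ Cr h A P ∧ z ∈ Lf h (Zs h A y)}

lemma span_faceAt {ι : Type*} (h : ι → E d) (A P : Finset ι) {y : E d} (hy : y ∈ Cr h A P) :
    affineSpan ℝ (faceAt h A P y) = (Lf h (Zs h A y)).toAffineSubspace := by
  apply le_antisymm
  · rw [affineSpan_le]
    exact fun z hz => hz.2
  · intro v hv
    have hv' : v ∈ Lf h (Zs h A y) := hv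
    obtain ⟨δ, hδ, H⟩ := move_L h A P hy ((Lf h (Zs h A y)).sub_mem hv' (self_mem_Lf h A y))
    have h1 : y ∈ affineSpan ℝ (faceAt h A P y) :=
      subset_affineSpan ℝ _ ⟨hy, self_mem_Lf h A y⟩
    have h2 : y + (δ / 2) • (v - y) ∈ affineSpan ℝ (faceAt h A P y) :=
      subset_affineSpan ℝ _ (H (δ / 2) (by rw [abs_of_pos (by linarith)]; linarith))
    have h3 := AffineMap.lineMap_mem (2 / δ) h1 h2
    have e : AffineMap.lineMap y (y + (δ / 2) • (v - y)) (2 / δ) = v := by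
      rw [AffineMap.lineMap_apply]
      simp only [vsub_eq_sub, add_sub_cancel_left, smul_smul, vadd_eq_add]
      rw [show 2 / δ * (δ / 2) = 1 by field_simp]
      simp
    rwa [e] at h3

lemma sdim_faceAt {ι : Type*} (h : ι → E d) (A P : Finset ι) {y : E d} (hy : y ∈ Cr h A P) :
    sdim (faceAt h A P y) = Module.finrank ℝ (Lf h (Zs h A y)) := by
  rw [sdim, span_faceAt h A P hy, Submodule.toAffineSubspace_direction]

lemma relint_faceAt {ι : Type*} (h : ι → E d) (A P : Finset ι) {y : E d} (hy : y ∈ Cr h A P) :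
    y ∈ intrinsicInterior ℝ (faceAt h A P y) := by
  rw [mem_intrinsicInterior]
  refine ⟨⟨y, subset_affineSpan ℝ _ ⟨hy, self_mem_Lf h A y⟩⟩, ?_, rfl⟩
  rw [mem_interior]
  refine ⟨Subtype.val ⁻¹' (Ur h (A \ Zs h A y) P), ?_,
    (Ur_isOpen h _ P).preimage continuous_subtype_val, mem_Ur_off h A P hy⟩
  rintro ⟨z, hz⟩ hzU
  rw [span_faceAt h A P hy] at hz
  have hz' : z ∈ Lf h (Zs h A y) := hz
  exact ⟨Cr_of_split h A P _ hzU (Lf_sub_Cr h P _ hz'), hz'⟩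

lemma isFace_faceAt {ι : Type*} (h : ι → E d) (A P : Finset ι) {y : E d} :
    IsFaceOf (Cr h A P) (faceAt h A P y) := by
  right
  have key : ∀ z : E d, ⟪-∑ i ∈ Zs h A y, sg P i • h i, z⟫
      = -∑ i ∈ Zs h A y, sg P i * ⟪h i, z⟫ := by
    intro z
    rw [inner_neg_left, sum_inner]
    simp only [inner_smul_left, conj_trivial]
  have nn : ∀ z ∈ Cr h A P, ∀ i ∈ Zs h A y, 0 ≤ sg P i * ⟪h i, z⟫ :=
    fun z hz i hi => hz i ((mem_Zs h A y i).1 hi).1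
  refine ⟨-∑ i ∈ Zs h A y, sg P i • h i, 0, ?_, ?_⟩
  · intro z hz
    rw [key, neg_nonpos]
    exact Finset.sum_nonneg (nn z hz)
  · ext z
    simp only [faceAt, mem_ofPred_eq]
    apply and_congr_right
    intro hz
    rw [key, neg_eq_zero, Finset.sum_eq_zero_iff_of_nonneg (nn z hz), mem_Lf]
    simp [sg_ne]

lemma relint_back {F : Set (E d)} {y z : E d} (hy : y ∈ intrinsicInterior ℝ F) (hz : z ∈ F) :
    ∃ t : ℝ, 0 < t ∧ y + (-t) • (z - y) ∈ F := by
  rw [mem_intrinsicInterior] at hy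
  obtain ⟨⟨y', hy'⟩, hi, rfl⟩ := hy
  have hzs : z ∈ affineSpan ℝ F := subset_affineSpan ℝ _ hz
  let g : ℝ → affineSpan ℝ F := fun t => ⟨AffineMap.lineMap y' z t, AffineMap.lineMap_mem t hy' hzs⟩
  have hg : Continuous g := by
    apply Continuous.subtype_mk
    exact AffineMap.lineMap_continuous
  have h0 : g 0 = ⟨y', hy'⟩ := by simp [g]
  have : g ⁻¹' (interior (Subtype.val ⁻¹' F)) ∈ nhds (0 : ℝ) :=
    (isOpen_interior.preimage hg).mem_nhds (by rw [mem_preimage, h0]; exact hi)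
  obtain ⟨δ, hδ, hb⟩ := Metric.mem_nhds_iff.1 this
  refine ⟨δ / 2, by linarith, ?_⟩
  have hm : -(δ / 2) ∈ Metric.ball (0 : ℝ) δ := by
    rw [Metric.mem_ball, Real.dist_eq, sub_zero, abs_neg, abs_of_pos (by linarith)]; linarith
  have := interior_subset (hb hm)
  have h2 : AffineMap.lineMap y' z (-(δ / 2)) ∈ F := this
  rw [AffineMap.lineMap_apply] at h2
  simpa [add_comm] using h2

lemma face_eq {ι : Type*} (h : ι → E d) (A P : Finset ι) {y : E d} {F : Set (E d)}
    (hF : IsFaceOf (Cr h A P) F) (hy : y ∈ intrinsicInterior ℝ F) :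
    F = faceAt h A P y := by
  have hyF : y ∈ F := intrinsicInterior_subset hy
  have hsub : F ⊆ Cr h A P := by
    rcases hF with rfl | ⟨u, c, -, rfl⟩
    · exact subset_rfl
    · exact fun z hz => hz.1
  have hyC := hsub hyF
  apply Subset.antisymm
  · intro z hz
    refine ⟨hsub hz, fun i hi => ?_⟩
    obtain ⟨t, ht, hb⟩ := relint_back hy hz
    obtain ⟨hiA, hi0⟩ := (mem_Zs h A y i).1 hi
    have h1 := hsub hz i hiA
    have h2 := hsub hb i hiA
    rw [inner_add_right, inner_smul_right, inner_sub_right, hi0] at h2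
    have h3 : sg P i * ⟪h i, z⟫ = 0 := by
      have : 0 ≤ -(t * (sg P i * ⟪h i, z⟫)) := by linarith
      have := mul_nonneg ht.le h1
      have h4 : t * (sg P i * ⟪h i, z⟫) = 0 := by linarith
      exact (mul_eq_zero.1 h4).resolve_left ht.ne'
    exact (mul_eq_zero.1 h3).resolve_left (sg_ne P i)
  · rintro z ⟨hzC, hzL⟩
    rcases hF with rfl | ⟨u, c, hu, rfl⟩
    · exact hzC
    · refine ⟨hzC, le_antisymm (hu z hzC) ?_⟩
      obtain ⟨δ, hδ, H⟩ := move_L h A P hyC ((Lf h (Zs h A y)).sub_mem hzL (self_mem_Lf h A y))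
      have h1 := hu _ (H (-(δ / 2)) (by rw [abs_neg, abs_of_pos (by linarith)]; linarith)).1
      have h2 := hyF.2
      rw [inner_add_right, inner_smul_right, inner_sub_right, h2] at h1
      have h3 : 0 ≤ (δ / 2) * (⟪u, z⟫ - c) := by linarith
      have := nonneg_of_mul_nonneg_right h3 (by linarith)
      linarith

lemma projDim_iff {ι : Type*} (h : ι → E d) (A P : Finset ι) (x : E d) (k : ℕ) :
    projDimEq (Cr h A P) x k ↔
      ∃ y, IsNearestPt (Cr h A P) x y ∧ Module.finrank ℝ (Lf h (Zs h A y)) = k := by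
  constructor
  · rintro ⟨y, F, hn, hF, hy, hk⟩
    refine ⟨y, hn, ?_⟩
    rw [← sdim_faceAt h A P hn.1, ← face_eq h A P hF hy, hk]
  · rintro ⟨y, hn, hk⟩
    exact ⟨y, faceAt h A P y, hn, isFace_faceAt h A P, relint_faceAt h A P hn.1,
      by rw [sdim_faceAt h A P hn.1, hk]⟩

lemma nearest_iff {C : Set (E d)} (hC : Convex ℝ C) (x y : E d) :
    IsNearestPt C x y ↔ y ∈ C ∧ ∀ z ∈ C, ⟪x - y, z - y⟫ ≤ 0 := by
  apply and_congr_right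
  intro hy
  rw [← norm_eq_iInf_iff_real_inner_le_zero hC hy]
  have : Nonempty C := ⟨⟨y, hy⟩⟩
  have hbd : BddBelow (range fun w : C => ‖x - w‖) :=
    ⟨0, by rintro _ ⟨w, rfl⟩; exact norm_nonneg _⟩
  constructor
  · intro H
    apply le_antisymm
    · apply le_ciInf
      intro w
      have := H w w.2
      rwa [dist_eq_norm, dist_eq_norm] at this
    · exact ciInf_le hbd ⟨y, hy⟩
  · intro H z hz
    rw [dist_eq_norm, dist_eq_norm, H]
    exact ciInf_le hbd ⟨z, hz⟩

lemma nearest_unique {C : Set (E d)} (hC : Convex ℝ C) {x y y' : E d}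
    (h1 : IsNearestPt C x y) (h2 : IsNearestPt C x y') : y = y' := by
  rw [nearest_iff hC] at h1 h2
  have a := h1.2 y' h2.1
  have b := h2.2 y h1.1
  have e : ⟪x - y, y' - y⟫ + ⟪x - y', y - y'⟫ = ⟪y - y', y - y'⟫ := by
    simp only [inner_sub_left, inner_sub_right]
    rw [real_inner_comm y y']
    ring
  have : ⟪y - y', y - y'⟫ = 0 := le_antisymm (by linarith) real_inner_self_nonneg
  rw [inner_self_eq_zero] at this
  exact sub_eq_zero.1 this

def Sset {ι : Type*} (h : ι → E d) (A P T : Finset ι) : Set (E d) :=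
  {x | Zs h A ((Lf h T).starProjection x) = T ∧ (Lf h T).starProjection x ∈ Cr h A P ∧
    ∀ z ∈ Cr h A P, ⟪x - (Lf h T).starProjection x, z⟫ ≤ 0}

lemma nearest_Z_iff {ι : Type*} (h : ι → E d) (A P T : Finset ι) (x : E d) :
    (∃ y, IsNearestPt (Cr h A P) x y ∧ Zs h A y = T) ↔ x ∈ Sset h A P T := by
  constructor
  · rintro ⟨y, hn, rfl⟩
    rw [nearest_iff (Cr_convex h A P)] at hn
    have ho : ∀ v ∈ Lf h (Zs h A y), ⟪x - y, v⟫ = 0 := by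
      intro v hv
      obtain ⟨δ, hδ, H⟩ := move_L h A P hn.1 hv
      have h1 := hn.2 _ (H (δ / 2) (by rw [abs_of_pos (by linarith)]; linarith)).1
      have h2 := hn.2 _ (H (-(δ / 2)) (by rw [abs_neg, abs_of_pos (by linarith)]; linarith)).1
      rw [add_sub_cancel_left, inner_smul_right] at h1 h2
      have h4 : (δ / 2) * ⟪x - y, v⟫ = 0 := by linarith
      exact (mul_eq_zero.1 h4).resolve_left (by linarith)
    have e : (Lf h (Zs h A y)).starProjection x = y :=
      Submodule.eq_starProjection_of_mem_of_inner_eq_zero (self_mem_Lf h A y) ho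
    refine ⟨by rw [e], by rw [e]; exact hn.1, ?_⟩
    rw [e]
    intro z hz
    have h1 := hn.2 z hz
    rw [inner_sub_right, ho y (self_mem_Lf h A y)] at h1
    linarith
  · rintro ⟨h1, h2, h3⟩
    refine ⟨_, ?_, h1⟩
    rw [nearest_iff (Cr_convex h A P)]
    refine ⟨h2, fun z hz => ?_⟩
    rw [inner_sub_right, Submodule.starProjection_inner_eq_zero _ _
      (Submodule.starProjection_apply_mem _ x), sub_zero]
    exact h3 z hz

lemma projDim_iff' {ι : Type*} (h : ι → E d) (A P : Finset ι) (x : E d) (k : ℕ) :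
    projDimEq (Cr h A P) x k ↔
      ∃ T ∈ A.powerset, Module.finrank ℝ (Lf h T) = k ∧ x ∈ Sset h A P T := by
  rw [projDim_iff]
  simp only [← nearest_Z_iff]
  constructor
  · rintro ⟨y, hn, hk⟩
    exact ⟨Zs h A y, Finset.mem_powerset.2 (Finset.filter_subset _ _), hk, y, hn, rfl⟩
  · rintro ⟨T, -, hk, y, hn, rfl⟩
    exact ⟨y, hn, hk⟩

lemma Sset_unique {ι : Type*} (h : ι → E d) (A P T T' : Finset ι) (x : E d)
    (h1 : x ∈ Sset h A P T) (h2 : x ∈ Sset h A P T') : T = T' := by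
  rw [← nearest_Z_iff] at h1 h2
  obtain ⟨y, hn, rfl⟩ := h1
  obtain ⟨y', hn', rfl⟩ := h2
  rw [nearest_unique (Cr_convex h A P) hn hn']

lemma Sset_measurable {ι : Type*} (h : ι → E d) (A P T : Finset ι) :
    MeasurableSet (Sset h A P T) := by
  have e : Sset h A P T = {x | Zs h A ((Lf h T).starProjection x) = T} ∩
      ((Lf h T).starProjection ⁻¹' Cr h A P) ∩
      ⋂ z ∈ Cr h A P, {x | ⟪x - (Lf h T).starProjection x, z⟫ ≤ 0} := by
    ext x; simp [Sset, and_assoc]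
  rw [e]
  refine (MeasurableSet.inter ?_ ?_).inter ?_
  · have e2 : {x | Zs h A ((Lf h T).starProjection x) = T} =
        {x | ∀ i ∈ A, (⟪h i, (Lf h T).starProjection x⟫ = 0 ↔ i ∈ T)} ∩ {x | T ⊆ A} := by
      ext x
      simp only [mem_inter_iff, mem_ofPred_eq]
      constructor
      · intro H
        refine ⟨fun i hi => ?_, ?_⟩
        · rw [← H, mem_Zs, H]; simp [hi]
        · rw [← H]; exact Finset.filter_subset _ _
      · rintro ⟨H, hT⟩
        ext i
        rw [mem_Zs]
        constructor
        · exact fun hi => (H i hi.1).1 hi.2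
        · exact fun hi => ⟨hT hi, (H i (hT hi)).2 hi⟩
    rw [e2]
    refine MeasurableSet.inter ?_ (MeasurableSet.const _)
    have e3 : {x | ∀ i ∈ A, (⟪h i, (Lf h T).starProjection x⟫ = 0 ↔ i ∈ T)} =
      ⋂ i ∈ A, {x | (⟪h i, (Lf h T).starProjection x⟫ = 0 ↔ i ∈ T)} := by
      ext x; simp
    rw [e3]
    apply Finset.measurableSet_biInter
    intro i _
    have hc : IsClosed {x | ⟪h i, (Lf h T).starProjection x⟫ = 0} :=
      isClosed_eq (by fun_prop) continuous_const
    by_cases hi : i ∈ T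
    · simpa [hi] using hc.measurableSet
    · have e4 : {x | (⟪h i, (Lf h T).starProjection x⟫ = 0 ↔ i ∈ T)} =
          {x | ⟪h i, (Lf h T).starProjection x⟫ = 0}ᶜ := by
        ext x; simp [hi]
      rw [e4]
      exact hc.measurableSet.compl
  · exact ((Cr_isClosed h A P).preimage (by fun_prop)).measurableSet
  · apply IsClosed.measurableSet
    apply isClosed_biInter
    intro z _
    exact isClosed_le (by fun_prop) continuous_const

lemma sg_congr {ι : Type*} {P Q : Finset ι} {i : ι} (hPQ : i ∈ P ↔ i ∈ Q) : sg P i = sg Q i := by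
  simp [sg, hPQ]

lemma Ur_congr {ι : Type*} (h : ι → E d) {T P Q : Finset ι} (H : ∀ i ∈ T, (i ∈ P ↔ i ∈ Q)) :
    Ur h T P = Ur h T Q := by
  ext z
  simp only [Ur, mem_ofPred_eq]
  exact forall₂_congr fun i hi => by rw [sg_congr (H i hi)]

lemma Ur_mono {ι : Type*} (h : ι → E d) {T A P : Finset ι} (H : T ⊆ A) :
    Ur h A P ⊆ Ur h T P := fun _ hz i hi => hz i (H hi)

/-- counting chambers whose projection lies in a fixed flat -/
lemma count_flat {ι : Type*} (h : ι → E d) (A T : Finset ι) (hTA : T ⊆ A) (x : E d)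
    (hZ : Zs h A ((Lf h T).starProjection x) = T) :
    ((A.powerset.filter fun P => (Ur h A P).Nonempty ∧ x ∈ Sset h A P T).card : ℤ)
    = ∑ P ∈ T.powerset,
      (if GoodS (x - (Lf h T).starProjection x) {z | z ∈ (⊤ : Submodule ℝ (E d)) ∧ z ∈ Ur h T P}
        then (1 : ℤ) else 0) := by
  have htop : ∀ P, {z | z ∈ (⊤ : Submodule ℝ (E d)) ∧ z ∈ Ur h T P} = Ur h T P := by
    intro P; ext z; simp
  simp only [htop]
  rw [Finset.sum_boole]
  congr 1
  set q := (Lf h T).starProjection x with hq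
  have hqT : ∀ i ∈ T, ⟪h i, q⟫ = 0 := fun i hi => by
    rw [← hZ] at hi; exact ((mem_Zs h A q i).1 hi).2
  have hqT' : ∀ i ∈ A, ⟪h i, q⟫ = 0 → i ∈ T := fun i hi h0 => by
    rw [← hZ]; exact (mem_Zs h A q i).2 ⟨hi, h0⟩
  have mv : ∀ P, q ∈ Cr h A P → ∀ z ∈ Ur h T P, ∃ t : ℝ, 0 < t ∧ q + t • z ∈ Ur h A P := by
    intro P hqC z hz
    obtain ⟨δ, hδ, H⟩ := open_move (Ur_isOpen h (A \ Zs h A q) P) (mem_Ur_off h A P hqC) z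
    refine ⟨δ / 2, by linarith, Ur_of_split h A P T ?_ ?_⟩
    · rw [hZ] at H
      exact H _ (by rw [abs_of_pos (by linarith)]; linarith)
    · refine Cr_add_Ur h T P ?_ hz (by linarith)
      intro i hi
      rw [hqT i hi, mul_zero]
  set N := A.filter (fun i => 0 < ⟪h i, q⟫) with hN
  have hNmem : ∀ i, i ∈ N ↔ i ∈ A ∧ 0 < ⟪h i, q⟫ := fun i => by simp [hN]
  refine Finset.card_nbij' (fun P => P ∩ T) (fun P => P ∪ N) ?_ ?_ ?_ ?_
  · intro P hP
    simp only [Finset.coe_filter, mem_ofPred_eq, Finset.mem_powerset] at hP ⊢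
    obtain ⟨hPA, ⟨w, hw⟩, -, hqC, hle⟩ := hP
    have hc : Ur h T (P ∩ T) = Ur h T P := Ur_congr h fun i hi => by simp [hi]
    refine ⟨Finset.inter_subset_right, ?_, ?_⟩
    · exact ⟨w, by rw [hc]; exact Ur_mono h hTA hw⟩
    · intro z hz
      rw [hc] at hz
      obtain ⟨t, ht, hm⟩ := mv P hqC z hz
      have h1 := hle _ (Ur_sub_Cr h A P hm)
      rw [inner_add_right, inner_smul_right, ← hq, Submodule.starProjection_inner_eq_zero _ _
        (Submodule.starProjection_apply_mem _ x), zero_add] at h1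
      exact nonpos_of_mul_nonpos_right h1 ht
  · intro P hP
    simp only [Finset.coe_filter, mem_ofPred_eq, Finset.mem_powerset] at hP ⊢
    obtain ⟨hPT, ⟨w, hw⟩, hle⟩ := hP
    have hc : Ur h T (P ∪ N) = Ur h T P := Ur_congr h fun i hi => by
      have : i ∉ N := fun hi' => by
        have := ((hNmem i).1 hi').2
        rw [hqT i hi] at this
        exact lt_irrefl _ this
      simp [this]
    have hqC : q ∈ Cr h A (P ∪ N) := by
      intro i hi
      by_cases hiT : i ∈ T
      · rw [hqT i hiT, mul_zero]
      · have hiP : i ∉ P := fun h' => hiT (hPT h')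
        by_cases hiN : i ∈ N
        · have := ((hNmem i).1 hiN).2
          simp [sg, hiN, this.le]
        · have : ¬ 0 < ⟪h i, q⟫ := fun h' => hiN ((hNmem i).2 ⟨hi, h'⟩)
          simp only [sg, Finset.mem_union, hiP, hiN, or_self, if_false]
          linarith
    obtain ⟨t, ht, hm⟩ := mv (P ∪ N) hqC w (by rw [hc]; exact hw)
    refine ⟨Finset.union_subset (hPT.trans hTA) (Finset.filter_subset _ _), ⟨_, hm⟩, hZ, hqC, ?_⟩
    intro z hz
    apply nonpos_of_small one_pos (b := ⟪x - q, q + t • w⟫)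
    intro s hs _
    have h1 := hle _ (hc ▸ Ur_mono h hTA (Cr_add_Ur h A _ hz hm hs))
    rwa [inner_add_right, inner_smul_right] at h1
  · intro P hP
    simp only [Finset.coe_filter, mem_ofPred_eq, Finset.mem_powerset] at hP
    obtain ⟨hPA, -, -, hqC, -⟩ := hP
    ext i
    simp only [Finset.mem_union, Finset.mem_inter]
    constructor
    · rintro (hi | hi)
      · exact hi.1
      · by_contra hiP
        obtain ⟨hiA, h0⟩ := (hNmem i).1 hi
        have := hqC i hiA
        simp only [sg, hiP, if_false] at this
        linarith
    · intro hi
      by_cases hiT : i ∈ T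
      · exact Or.inl ⟨hi, hiT⟩
      · right
        have := hqC i (hPA hi)
        simp only [sg, hi, if_true, one_mul] at this
        exact (hNmem i).2 ⟨hPA hi, lt_of_le_of_ne this fun e => hiT (hqT' i (hPA hi) e.symm)⟩
  · intro P hP
    simp only [Finset.coe_filter, mem_ofPred_eq, Finset.mem_powerset] at hP
    obtain ⟨hPT, -⟩ := hP
    ext i
    simp only [Finset.mem_union, Finset.mem_inter]
    constructor
    · rintro ⟨hi | hi, hiT⟩
      · exact hi
      · have := ((hNmem i).1 hi).2
        rw [hqT i hiT] at this
        exact (lt_irrefl _ this).elim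
    · exact fun hi => ⟨Or.inl hi, hPT hi⟩

lemma Lf_anti {ι : Type*} (h : ι → E d) {B T : Finset ι} (H : B ⊆ T) : Lf h T ≤ Lf h B :=
  fun _ hz i hi => hz i (H hi)

/-- the deterministic theorem -/
lemma count_total {ι : Type*} (h : ι → E d) (A : Finset ι) (x : E d) (k : ℕ)
    (hgen : ∀ B ∈ A.powerset, ∀ T ∈ A.powerset,
      (Lf h B).starProjection x = (Lf h T).starProjection x → Lf h B = Lf h T) :
    ((A.powerset.filter fun P => (Ur h A P).Nonempty ∧ projDimEq (Cr h A P) x k).card : ℤ)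
    = ∑ B ∈ A.powerset, if Module.finrank ℝ (Lf h B) = k then (-1 : ℤ) ^ (B.card + d + k) else 0 := by
  have s1 : ((A.powerset.filter fun P => (Ur h A P).Nonempty ∧ projDimEq (Cr h A P) x k).card : ℤ)
      = ∑ T ∈ A.powerset, if Module.finrank ℝ (Lf h T) = k then
        ((A.powerset.filter fun P => (Ur h A P).Nonempty ∧ x ∈ Sset h A P T).card : ℤ) else 0 := by
    rw [← Finset.sum_boole]
    have : ∀ T, (if Module.finrank ℝ (Lf h T) = k then
        ((A.powerset.filter fun P => (Ur h A P).Nonempty ∧ x ∈ Sset h A P T).card : ℤ) else 0)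
        = ∑ P ∈ A.powerset, if ((Ur h A P).Nonempty ∧ Module.finrank ℝ (Lf h T) = k ∧
          x ∈ Sset h A P T) then (1 : ℤ) else 0 := by
      intro T
      rw [← Finset.sum_boole]
      split_ifs with hk
      · simp [hk]
      · simp [hk]
    simp only [this]
    rw [Finset.sum_comm]
    apply Finset.sum_congr rfl
    intro P _
    by_cases hc : (Ur h A P).Nonempty ∧ projDimEq (Cr h A P) x k
    · rw [if_pos hc]
      obtain ⟨hU, hp⟩ := hc
      obtain ⟨T, hT, hk, hx⟩ := (projDim_iff' h A P x k).1 hp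
      rw [Finset.sum_eq_single_of_mem T hT, if_pos ⟨hU, hk, hx⟩]
      intro T' _ hne
      rw [if_neg]
      rintro ⟨-, -, hx'⟩
      exact hne (Sset_unique h A P _ _ x hx' hx)
    · rw [if_neg hc, Finset.sum_eq_zero]
      intro T hT
      rw [if_neg]
      rintro ⟨hU, hk, hx⟩
      exact hc ⟨hU, (projDim_iff' h A P x k).2 ⟨T, hT, hk, hx⟩⟩
  rw [s1]
  have s2 : ∀ T ∈ A.powerset, (if Module.finrank ℝ (Lf h T) = k then
        ((A.powerset.filter fun P => (Ur h A P).Nonempty ∧ x ∈ Sset h A P T).card : ℤ) else 0)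
      = ∑ B ∈ A.powerset, if (Module.finrank ℝ (Lf h B) = k ∧ T = Zs h A ((Lf h B).starProjection x))
        then (-1 : ℤ) ^ (B.card + d + k) else 0 := by
    intro T hT
    have hTA := Finset.mem_powerset.1 hT
    by_cases hZ : Zs h A ((Lf h T).starProjection x) = T
    · rw [count_flat h A T hTA x hZ, core]
      have : ∀ B ∈ T.powerset, (∀ z ∈ (⊤ : Submodule ℝ (E d)) ⊓ Lf h B,
          ⟪x - (Lf h T).starProjection x, z⟫ = 0) ↔
          T = Zs h A ((Lf h B).starProjection x) := by
        intro B hB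
        have hBT := Finset.mem_powerset.1 hB
        rw [top_inf_eq]
        constructor
        · intro H
          have : (Lf h B).starProjection x = (Lf h T).starProjection x :=
            Submodule.eq_starProjection_of_mem_of_inner_eq_zero
              (Lf_anti h hBT (Submodule.starProjection_apply_mem _ x)) H
          rw [this, hZ]
        · intro e
          have : (Lf h T).starProjection x = (Lf h B).starProjection x := by
            apply Submodule.eq_starProjection_of_mem_of_inner_eq_zero
            · have := self_mem_Lf h A ((Lf h B).starProjection x)
              rwa [← e] at this
            · intro w hw
              exact Submodule.starProjection_inner_eq_zero _ _ (Lf_anti h hBT hw)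
          rw [this]
          exact fun z hz => Submodule.starProjection_inner_eq_zero _ _ hz
      have hL : ∀ B ∈ A.powerset, T = Zs h A ((Lf h B).starProjection x) → Lf h B = Lf h T := by
        intro B hB e
        have hBT : B ⊆ T := by
          intro i hi
          rw [e, mem_Zs]
          exact ⟨Finset.mem_powerset.1 hB hi, Submodule.starProjection_apply_mem (Lf h B) x i hi⟩
        apply hgen B hB T hT
        symm
        apply Submodule.eq_starProjection_of_mem_of_inner_eq_zero
        · have := self_mem_Lf h A ((Lf h B).starProjection x)
          rwa [← e] at this
        · intro w hw
          exact Submodule.starProjection_inner_eq_zero _ _ (Lf_anti h hBT hw)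
      have hsub : T.powerset ⊆ A.powerset := Finset.powerset_mono.2 hTA
      rw [← Finset.sum_subset hsub]
      · split_ifs with hk
        · apply Finset.sum_congr rfl
          intro B hB
          by_cases hc : T = Zs h A ((Lf h B).starProjection x)
          · have hLB := hL B (hsub hB) hc
            rw [if_pos ((this B hB).2 hc), if_pos ⟨by rw [hLB, hk], hc⟩, top_inf_eq, hLB, hk]
            simp
          · rw [if_neg (fun h' => hc ((this B hB).1 h')), if_neg (fun h' => hc h'.2)]
        · rw [Finset.sum_eq_zero]
          intro B hB
          rw [if_neg]
          rintro ⟨h1, h2⟩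
          rw [hL B (hsub hB) h2] at h1
          exact hk h1
      · intro B hB hBT
        rw [if_neg]
        rintro ⟨-, e⟩
        apply hBT
        rw [Finset.mem_powerset]
        intro i hi
        rw [e, mem_Zs]
        exact ⟨Finset.mem_powerset.1 hB hi, Submodule.starProjection_apply_mem (Lf h B) x i hi⟩
    · have e0 : (A.powerset.filter fun P => (Ur h A P).Nonempty ∧ x ∈ Sset h A P T) = ∅ := by
        rw [Finset.filter_eq_empty_iff]
        rintro P - ⟨-, hx⟩
        exact hZ hx.1
      rw [e0, Finset.sum_eq_zero]
      · simp
      · intro B hB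
        rw [if_neg]
        rintro ⟨-, e⟩
        apply hZ
        have hBT : B ⊆ T := by
          intro i hi
          rw [e, mem_Zs]
          exact ⟨Finset.mem_powerset.1 hB hi, Submodule.starProjection_apply_mem (Lf h B) x i hi⟩
        have : (Lf h T).starProjection x = (Lf h B).starProjection x := by
          apply Submodule.eq_starProjection_of_mem_of_inner_eq_zero
          · have := self_mem_Lf h A ((Lf h B).starProjection x)
            rwa [← e] at this
          · intro w hw
            exact Submodule.starProjection_inner_eq_zero _ _ (Lf_anti h hBT hw)
        rw [this, ← e]
  rw [Finset.sum_congr rfl s2, Finset.sum_comm]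
  apply Finset.sum_congr rfl
  intro B hB
  rw [Finset.sum_eq_single_of_mem (Zs h A ((Lf h B).starProjection x))
    (Finset.mem_powerset.2 (Finset.filter_subset _ _))]
  · simp
  · intro T _ hne
    rw [if_neg]
    exact fun h' => hne h'.2

lemma closure_Ur {ι : Type*} (h : ι → E d) (A P : Finset ι) (hU : (Ur h A P).Nonempty) :
    closure (Ur h A P) = Cr h A P := by
  apply Subset.antisymm
  · exact closure_minimal (Ur_sub_Cr h A P) (Cr_isClosed h A P)
  · intro z hz
    obtain ⟨w, hw⟩ := hU
    have hc : Filter.Tendsto (fun t : ℝ => z + t • w) (nhdsWithin 0 (Ioi 0)) (nhds z) := by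
      have h1 : Continuous (fun t : ℝ => z + t • w) := by fun_prop
      have := h1.tendsto 0
      simp only [zero_smul, add_zero] at this
      exact this.mono_left nhdsWithin_le_nhds
    refine mem_closure_of_tendsto hc ?_
    filter_upwards [self_mem_nhdsWithin] with t ht
    exact Cr_add_Ur h A P hz hw ht

lemma comp_eq_Ur (h : Set (E d) → E d) (A P : Finset (Set (E d)))
    (hh : ∀ H ∈ A, H = {z | ⟪h H, z⟫ = 0}) (x : E d) (hx : x ∈ Ur h A P) :
    connectedComponentIn (⋃ H ∈ A, H)ᶜ x = Ur h A P := by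
  have hsub : Ur h A P ⊆ (⋃ H ∈ A, H)ᶜ := by
    intro z hz hz'
    simp only [mem_iUnion] at hz'
    obtain ⟨H, hH, hzH⟩ := hz'
    have h1 := hz H hH
    rw [hh H hH] at hzH
    have : ⟪h H, z⟫ = 0 := hzH
    rw [this, mul_zero] at h1
    exact lt_irrefl _ h1
  apply Subset.antisymm
  · intro z hz i hi
    have hpre : IsPreconnected (connectedComponentIn (⋃ H ∈ A, H)ᶜ x) :=
      isPreconnected_connectedComponentIn
    have hxm : x ∈ connectedComponentIn (⋃ H ∈ A, H)ᶜ x := mem_connectedComponentIn (hsub hx)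
    by_contra hneg
    push Not at hneg
    have hcont : ContinuousOn (fun z : E d => sg P i * ⟪h i, z⟫)
        (connectedComponentIn (⋃ H ∈ A, H)ᶜ x) := by
      apply Continuous.continuousOn; fun_prop
    obtain ⟨w, hw, hw0⟩ := hpre.intermediate_value hz hxm hcont ⟨hneg, (hx i hi).le⟩
    have h0 : ⟪h i, w⟫ = 0 := (mul_eq_zero.1 hw0).resolve_left (sg_ne P i)
    have := connectedComponentIn_subset _ _ hw
    apply this
    simp only [mem_iUnion]
    refine ⟨i, hi, ?_⟩
    rw [hh i hi]
    exact h0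
  · exact (Ur_convex h A P).isPreconnected.subset_connectedComponentIn hx hsub

lemma chamber_iff (h : Set (E d) → E d) (A : Finset (Set (E d)))
    (hh : ∀ H ∈ A, H = {z | ⟪h H, z⟫ = 0}) (C : Set (E d)) :
    IsChamber A C ↔ ∃ P ∈ A.powerset, (Ur h A P).Nonempty ∧ Cr h A P = C := by
  constructor
  · rintro ⟨x, hx, rfl⟩
    have hxU : x ∈ Ur h A (A.filter fun i => 0 < ⟪h i, x⟫) := by
      intro i hi
      have hne : ⟪h i, x⟫ ≠ 0 := by
        intro h0
        apply hx
        simp only [mem_iUnion]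
        refine ⟨i, hi, ?_⟩
        rw [hh i hi]
        exact h0
      rcases lt_or_gt_of_ne hne with h' | h'
      · simp [sg, h'.not_gt, h']
      · simp [sg, hi, h']
    refine ⟨_, Finset.mem_powerset.2 (Finset.filter_subset _ _), ⟨x, hxU⟩, ?_⟩
    rw [comp_eq_Ur h A _ hh x hxU, closure_Ur h A _ ⟨x, hxU⟩]
  · rintro ⟨P, -, ⟨x, hx⟩, rfl⟩
    refine ⟨x, ?_, ?_⟩
    · have := comp_eq_Ur h A P hh x hx
      intro hc
      rw [connectedComponentIn_eq_empty (by simpa using hc)] at this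
      rw [← this] at hx
      exact hx
    · rw [comp_eq_Ur h A _ hh x hx, closure_Ur h A _ ⟨x, hx⟩]

lemma Cr_inj {ι : Type*} (h : ι → E d) {A P Q : Finset ι} (hP : P ⊆ A) (hQ : Q ⊆ A)
    (hU : (Ur h A P).Nonempty) (e : Cr h A P = Cr h A Q) : P = Q := by
  obtain ⟨w, hw⟩ := hU
  have hw' : w ∈ Cr h A Q := e ▸ Ur_sub_Cr h A P hw
  have key : ∀ i ∈ A, (i ∈ P ↔ i ∈ Q) := by
    intro i hi
    have h1 := hw i hi
    have h2 := hw' i hi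
    by_cases hp : i ∈ P <;> by_cases hq : i ∈ Q <;> simp [sg, hp, hq] at h1 h2 ⊢ <;> linarith
  ext i
  exact ⟨fun hi => (key i (hP hi)).1 hi, fun hi => (key i (hQ hi)).2 hi⟩

/-- Klivans–Swartz: for a rotationally invariant probability
measure giving zero mass to proper subspaces, `Σ_C ν_k(C) = a_k`. -/
theorem stmt11 {d : ℕ} (A : Finset (Set (E d)))
    (hA : ∀ H ∈ A, IsLinearHyperplane H)
    (μ : MeasureTheory.Measure (E d)) [MeasureTheory.IsProbabilityMeasure μ]
    (hrot : ∀ g : (E d) ≃ₗᵢ[ℝ] (E d), MeasureTheory.Measure.map (⇑g) μ = μ)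
    (hnull : ∀ V : Submodule ℝ (E d), V ≠ ⊤ → μ (V : Set (E d)) = 0)
    (k : ℕ) (hk : k ≤ d)
    (R : Finset (Set (E d))) (hR : ∀ P : Set (E d), P ∈ R ↔ IsChamber A P) :
    ∑ C ∈ R, (μ {x : E d | projDimEq C x k}).toReal = (charCoeff A k : ℝ) := by
  have hex : ∀ H : Set (E d), ∃ y : E d, H ∈ A → H = {z | ⟪y, z⟫ = 0} := by
    intro H
    by_cases hH : H ∈ A
    · obtain ⟨y, -, hy⟩ := hA H hH
      exact ⟨y, fun _ => hy⟩
    · exact ⟨0, fun h' => (hH h').elim⟩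
  choose h hh using hex
  set F := A.powerset.filter fun P => (Ur h A P).Nonempty with hF
  have hRF : R = F.image (Cr h A) := by
    ext C
    rw [hR, chamber_iff h A hh]
    simp [hF, and_assoc]
  have hinj : Set.InjOn (Cr h A) F := by
    intro P hP Q hQ e
    simp only [hF, Finset.coe_filter, mem_ofPred_eq, Finset.mem_powerset] at hP hQ
    exact Cr_inj h hP.1 hQ.1 hP.2 e
  rw [hRF, Finset.sum_image hinj]
  have hmeas : ∀ P, MeasurableSet {x : E d | projDimEq (Cr h A P) x k} := by
    intro P
    have : {x : E d | projDimEq (Cr h A P) x k} =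
        ⋃ T ∈ A.powerset.filter (fun T => Module.finrank ℝ (Lf h T) = k), Sset h A P T := by
      ext x
      rw [mem_ofPred_eq, projDim_iff']
      simp [and_assoc]
    rw [this]
    exact Finset.measurableSet_biUnion _ fun T _ => Sset_measurable h A P T
  have hgen : ∀ᵐ x ∂μ, ∀ B ∈ A.powerset, ∀ T ∈ A.powerset,
      (Lf h B).starProjection x = (Lf h T).starProjection x → Lf h B = Lf h T := by
    have hcB : ∀ B ∈ A.powerset, ∀ᵐ x ∂μ, ∀ T ∈ A.powerset,
        (Lf h B).starProjection x = (Lf h T).starProjection x → Lf h B = Lf h T := by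
      intro B _
      rw [Finset.eventually_all]
      intro T _
      by_cases hBT : Lf h B = Lf h T
      · exact Filter.Eventually.of_forall fun _ _ => hBT
      · have hker : LinearMap.ker ((Lf h B).starProjection - (Lf h T).starProjection :
            E d →L[ℝ] E d).toLinearMap ≠ ⊤ := by
          intro e
          apply hBT
          have hx : ∀ x, (Lf h B).starProjection x = (Lf h T).starProjection x := by
            intro x
            have : x ∈ LinearMap.ker ((Lf h B).starProjection - (Lf h T).starProjection :
              E d →L[ℝ] E d).toLinearMap := by rw [e]; trivial
            rw [LinearMap.mem_ker] at this
            exact sub_eq_zero.1 this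
          ext x
          rw [← Submodule.starProjection_eq_self_iff, ← Submodule.starProjection_eq_self_iff, hx]
        have h0 := hnull _ hker
        rw [MeasureTheory.ae_iff]
        refine MeasureTheory.measure_mono_null ?_ h0
        intro x hx
        simp only [mem_ofPred_eq, Classical.not_imp] at hx
        exact sub_eq_zero.2 hx.1
    exact (Finset.eventually_all A.powerset).2 hcB
  have hintegral : ∀ P, (μ {x : E d | projDimEq (Cr h A P) x k}).toReal =
      ∫ x, Set.indicator {x : E d | projDimEq (Cr h A P) x k} (fun _ => (1 : ℝ)) x ∂μ := by
    intro P
    rw [MeasureTheory.integral_indicator_const _ (hmeas P)]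
    simp [MeasureTheory.measureReal_def]
  simp only [hintegral]
  rw [← MeasureTheory.integral_finsetSum]
  · have hae : (fun x => ∑ P ∈ F, Set.indicator {x : E d | projDimEq (Cr h A P) x k}
        (fun _ => (1 : ℝ)) x) =ᵐ[μ] fun _ => (charCoeff A k : ℝ) := by
      filter_upwards [hgen] with x hx
      have h1 := count_total h A x k hx
      have h2 : ∑ P ∈ F, Set.indicator {x : E d | projDimEq (Cr h A P) x k} (fun _ => (1 : ℝ)) x
          = (((A.powerset.filter fun P => (Ur h A P).Nonempty ∧
            projDimEq (Cr h A P) x k).card : ℤ) : ℝ) := by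
        rw [← Finset.filter_filter, ← hF]
        simp only [Set.indicator_apply, mem_ofPred_eq]
        rw [Finset.sum_boole]
        simp
      rw [h2, h1]
      congr 1
      rw [charCoeff, Finset.mul_sum]
      apply Finset.sum_congr rfl
      intro B hB
      have e1 : interSet B = (Lf h B : Set (E d)) := by
        ext z
        simp only [interSet, mem_iInter, SetLike.mem_coe, mem_Lf]
        refine forall₂_congr fun H hH => ?_
        have := hh H (Finset.mem_powerset.1 hB hH)
        constructor
        · intro hz; rw [this] at hz; exact hz
        · intro hz; rw [this]; exact hz
      have e2 : sdim (interSet B) = Module.finrank ℝ (Lf h B) := by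
        have e3 : affineSpan ℝ ((Lf h B : Submodule ℝ (E d)) : Set (E d))
            = (Lf h B).toAffineSubspace :=
          AffineSubspace.affineSpan_coe (Lf h B).toAffineSubspace
        rw [sdim, e1, e3, Submodule.toAffineSubspace_direction]
      have e4 : (interSet B).Nonempty := by rw [e1]; exact ⟨0, (Lf h B).zero_mem⟩
      simp only [e2, e4, true_and]
      split_ifs
      · obtain ⟨m, rfl⟩ := Nat.exists_eq_add_of_le hk
        rw [Nat.add_sub_cancel_left, ← pow_add,
          show B.card + (k + m) + k = (m + B.card) + 2 * k by ring, pow_add _ _ (2 * k), pow_mul]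
        simp
      · simp
    rw [MeasureTheory.integral_congr_ae hae]
    simp
  · intro P _
    exact (MeasureTheory.integrable_const (1 : ℝ)).indicator (hmeas P)
end
end

section
/- Let P ⊆ ℝ^d be a bounded polyhedral set (a polytope). Then for every x ∈ ℝ^d, Σ_{k=0}^d (−1)^k Σ_{F ∈ F_k(P)} 1_{F − N_F(P)}(x) = 1, where the inner sum is over all k-dimensional faces F of P and F − N_F(P) = {f − n : f ∈ F, n ∈ N_F(P)}. -/
open scoped RealInnerProductSpace Pointwise Classical
open Set

noncomputable section

variable {d : ℕ}

/-! ### Euler characteristic of combinations of compact convex sets -/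

/-- Integer indicator. -/
def ind {α : Type*} (A : Set α) (p : α) : ℤ := if p ∈ A then 1 else 0

/-- Indicator of nonemptiness. -/
def ne1 {α : Type*} (A : Set α) : ℤ := if A.Nonempty then 1 else 0

lemma ne1_empty {α : Type*} : ne1 (∅ : Set α) = 0 := by simp [ne1]

lemma ne1_congr {α β : Type*} {A : Set α} {B : Set β} (h : A.Nonempty ↔ B.Nonempty) :
    ne1 A = ne1 B := by simp [ne1, h]

lemma ne1_eq_ind {α β : Type*} {A : Set α} {B : Set β} {b : β} (h : A.Nonempty ↔ b ∈ B) :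
    ne1 A = ind B b := by simp [ne1, ind, h]

lemma ind_inter {α : Type*} (A B : Set α) (p : α) : ind (A ∩ B) p = ind A p * ind B p := by
  by_cases h1 : p ∈ A <;> by_cases h2 : p ∈ B <;> simp [ind, h1, h2]

lemma oneD_Icc {ι : Type} [Fintype ι] (a : ι → ℤ) (α β : ι → ℝ) (hαβ : ∀ i, α i ≤ β i)
    (h : ∀ t, ∑ i, a i * ind (Icc (α i) (β i)) t = 0) : ∑ i, a i = 0 := by
  have key : ∀ t : ℝ, ∑ i with β i = t, a i = 0 := by
    intro t
    have hev : ∀ i, ∀ᶠ s in nhdsWithin t (Ioi t),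
        (ind (Icc (α i) (β i)) s = ind (Ico (α i) (β i)) t) := by
      intro i
      have hgt : ∀ᶠ s in nhdsWithin t (Ioi t), t < s := self_mem_nhdsWithin
      rcases lt_or_ge t (α i) with h1 | h1
      · have : ∀ᶠ s in nhdsWithin t (Ioi t), s < α i :=
          nhdsWithin_le_nhds (Iio_mem_nhds h1)
        filter_upwards [this] with s hs
        simp [ind, hs.not_ge, h1.not_ge]
      rcases lt_or_ge t (β i) with h2 | h2
      · have : ∀ᶠ s in nhdsWithin t (Ioi t), s < β i :=
          nhdsWithin_le_nhds (Iio_mem_nhds h2)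
        filter_upwards [this, hgt] with s hs hs'
        simp [ind, hs.le, h1, h2, h1.trans hs'.le]
      · filter_upwards [hgt] with s hs
        have : ¬ (s ≤ β i) := by linarith
        have h3 : ¬ (t < β i) := by linarith
        simp [ind, this, h3]
    obtain ⟨s, hs⟩ := (Filter.eventually_all.2 hev).exists
    have e1 := h t
    have e2 := h s
    simp_rw [hs] at e2
    rw [Finset.sum_filter]
    have : ∑ i, (a i * ind (Icc (α i) (β i)) t - a i * ind (Ico (α i) (β i)) t) = 0 := by
      rw [Finset.sum_sub_distrib, e1, e2, sub_zero]
    refine Eq.trans ?_ this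
    refine Finset.sum_congr rfl fun i _ => ?_
    have := hαβ i
    rcases lt_trichotomy (β i) t with h1 | h1 | h1
    · simp [ind, h1.not_ge, h1.ne, h1.not_gt]
    · subst h1
      simp [ind, hαβ i]
    · by_cases h2 : α i ≤ t <;> simp [ind, h1, h1.le, h1.ne', h2]
  have := Finset.sum_fiberwise_of_maps_to (s := Finset.univ) (t := Finset.univ.image β) (g := β)
    (fun i _ => Finset.mem_image_of_mem _ (Finset.mem_univ i)) a
  rw [← this]
  exact Finset.sum_eq_zero fun t _ => key t

lemma oneD {ι : Type} [Fintype ι] (a : ι → ℤ) (K : ι → Set ℝ) (hK : ∀ i, IsCompact (K i))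
    (hc : ∀ i, Convex ℝ (K i)) (h : ∀ t, ∑ i, a i * ind (K i) t = 0) :
    ∑ i, a i * ne1 (K i) = 0 := by
  have hI : ∀ i, (K i).Nonempty → K i = Icc (sInf (K i)) (sSup (K i)) := fun i hn =>
    eq_Icc_of_connected_compact ⟨hn, (hc i).isPreconnected⟩ (hK i)
  have := oneD_Icc (fun i => a i * ne1 (K i)) (fun i => if (K i).Nonempty then sInf (K i) else 0)
    (fun i => if (K i).Nonempty then sSup (K i) else 0) ?_ ?_
  · exact this
  · intro i
    by_cases hn : (K i).Nonempty
    · simp only [hn, if_true]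
      have := hn
      rw [hI i hn] at this
      exact nonempty_Icc.1 this
    · simp [hn]
  · intro t
    rw [← h t]
    refine Finset.sum_congr rfl fun i _ => ?_
    by_cases hn : (K i).Nonempty
    · simp only [hn, if_true, ne1, mul_one]
      rw [← hI i hn]
    · rw [not_nonempty_iff_eq_empty] at hn
      simp [hn, ne1, ind]

/-- One-dimensional integration, comparing with a given one-dimensional combination. -/
lemma fubini {ι κ : Type} [Fintype ι] [Fintype κ] (a : ι → ℤ) (K : ι → Set (E d))
    (hK : ∀ i, IsCompact (K i)) (hc : ∀ i, Convex ℝ (K i)) (L : E d →L[ℝ] ℝ)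
    (b : κ → ℤ) (J : κ → Set ℝ) (hJ : ∀ i, IsCompact (J i)) (hJc : ∀ i, Convex ℝ (J i))
    (h : ∀ t, ∑ i, a i * ne1 (K i ∩ {p | L p = t}) = ∑ j, b j * ind (J j) t) :
    ∑ i, a i * ne1 (K i) = ∑ j, b j * ne1 (J j) := by
  have := oneD (ι := ι ⊕ κ) (Sum.elim a (fun j => - b j)) (Sum.elim (fun i => L '' K i) J) ?_ ?_ ?_
  · simp only [Fintype.sum_sum_type, Sum.elim_inl, Sum.elim_inr, neg_mul,
      Finset.sum_neg_distrib] at this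
    have e : ∀ i, ne1 (L '' K i) = ne1 (K i) := fun i => ne1_congr (by simp)
    simp_rw [e] at this
    linarith
  · rintro (i | j)
    · exact (hK i).image L.continuous
    · exact hJ j
  · rintro (i | j)
    · exact (hc i).linear_image L.toLinearMap
    · exact hJc j
  · intro t
    simp only [Fintype.sum_sum_type, Sum.elim_inl, Sum.elim_inr, neg_mul, Finset.sum_neg_distrib]
    rw [← h t, ← sub_eq_add_neg, sub_eq_zero]
    refine Finset.sum_congr rfl fun i _ => ?_
    congr 1

lemma fubini_zero {ι : Type} [Fintype ι] (a : ι → ℤ) (K : ι → Set (E d))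
    (hK : ∀ i, IsCompact (K i)) (hc : ∀ i, Convex ℝ (K i)) (L : E d →L[ℝ] ℝ)
    (h : ∀ t, ∑ i, a i * ne1 (K i ∩ {p | L p = t}) = 0) :
    ∑ i, a i * ne1 (K i) = 0 := by
  have := fubini (κ := Empty) a K hK hc L (fun _ => 0) (fun _ => ∅) (by simp) (by simp)
    (by simpa using h)
  simpa using this

lemma hadwiger {ι : Type} [Fintype ι] (a : ι → ℤ) (K : ι → Set (E d))
    (hK : ∀ i, IsCompact (K i)) (hc : ∀ i, Convex ℝ (K i))
    (h : ∀ p, ∑ i, a i * ind (K i) p = 0) :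
    ∑ i, a i * ne1 (K i) = 0 := by
  have key : ∀ s : Finset (Fin d), ∀ z : E d,
      ∑ i, a i * ne1 (K i ∩ {p | ∀ l, l ∉ s → p l = z l}) = 0 := by
    intro s
    induction s using Finset.induction_on with
    | empty =>
      intro z
      rw [← h z]
      refine Finset.sum_congr rfl fun i _ => ?_
      congr 1
      apply ne1_eq_ind
      constructor
      · rintro ⟨p, hp, hp'⟩
        have : p = z := by ext l; exact hp' l (by simp)
        exact this ▸ hp
      · intro hz; exact ⟨z, hz, by simp⟩
    | insert j s hj ih =>
      intro z
      have hcl : IsClosed {p : E d | ∀ l, l ∉ insert j s → p l = z l} := by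
        simp only [ofPred_forall]
        refine isClosed_iInter fun l => isClosed_iInter fun _ => isClosed_eq ?_ continuous_const
        fun_prop
      have hcv : Convex ℝ {p : E d | ∀ l, l ∉ insert j s → p l = z l} := by
        intro p hp q hq α β _ _ hab l hl
        simp only [mem_ofPred_eq] at hp hq
        simp only [PiLp.add_apply, PiLp.smul_apply, smul_eq_mul, hp l hl, hq l hl]
        rw [← add_mul, hab, one_mul]
      apply fubini_zero a _ (fun i => (hK i).inter_right hcl) (fun i => (hc i).inter hcv)
        (EuclideanSpace.proj j : E d →L[ℝ] ℝ)
      intro t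
      rw [← ih (WithLp.toLp 2 (Function.update z j t))]
      refine Finset.sum_congr rfl fun i _ => ?_
      congr 2
      ext p
      simp only [mem_inter_iff, mem_ofPred_eq, PiLp.proj_apply, and_assoc]
      refine and_congr_right fun _ => ?_
      constructor
      · rintro ⟨h1, h2⟩ l hl
        by_cases hlj : l = j
        · subst hlj; simpa using h2
        · simpa [hlj] using h1 l (by simp [hlj, hl])
      · intro h1
        refine ⟨fun l hl => ?_, by simpa using h1 j hj⟩
        simp only [Finset.mem_insert, not_or] at hl
        simpa [hl.1] using h1 l hl.2
  simpa using key Finset.univ 0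

/-- `g` is an integer combination of indicators of compact convex sets with Euler
characteristic `c`. -/
def IsChi (g : E d → ℤ) (c : ℤ) : Prop :=
  ∃ (ι : Type) (_ : Fintype ι) (a : ι → ℤ) (K : ι → Set (E d)),
    (∀ i, IsCompact (K i)) ∧ (∀ i, Convex ℝ (K i)) ∧
    (∀ p, g p = ∑ i, a i * ind (K i) p) ∧ c = ∑ i, a i * ne1 (K i)

lemma IsChi.zero : IsChi (fun _ : E d => 0) 0 :=
  ⟨Empty, inferInstance, fun _ => 0, fun _ => ∅, by simp, by simp, by simp, by simp⟩

lemma IsChi.add {g h : E d → ℤ} {b c : ℤ} (hg : IsChi g b) (hh : IsChi h c) :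
    IsChi (fun p => g p + h p) (b + c) := by
  obtain ⟨ι, _, a, K, h1, h2, h3, h4⟩ := hg
  obtain ⟨ι', _, a', K', h1', h2', h3', h4'⟩ := hh
  refine ⟨ι ⊕ ι', inferInstance, Sum.elim a a', Sum.elim K K', ?_, ?_, ?_, ?_⟩
  · rintro (i | i); exacts [h1 i, h1' i]
  · rintro (i | i); exacts [h2 i, h2' i]
  · intro p; simp [h3, h3']
  · simp [h4, h4']

lemma IsChi.neg {g : E d → ℤ} {b : ℤ} (hg : IsChi g b) : IsChi (fun p => - g p) (- b) := by
  obtain ⟨ι, _, a, K, h1, h2, h3, h4⟩ := hg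
  exact ⟨ι, inferInstance, fun i => - a i, K, h1, h2, by simp [h3], by simp [h4]⟩

lemma IsChi.sum {κ : Type*} (s : Finset κ) {g : κ → E d → ℤ} {b : κ → ℤ}
    (h : ∀ i ∈ s, IsChi (g i) (b i)) : IsChi (fun p => ∑ i ∈ s, g i p) (∑ i ∈ s, b i) := by
  induction s using Finset.induction_on with
  | empty => simpa using IsChi.zero
  | insert j s hj ih =>
    simp only [Finset.sum_insert hj]
    exact (h j (by simp)).add (ih fun i hi => h i (by simp [hi]))

lemma IsChi.unique {g : E d → ℤ} {b c : ℤ} (hb : IsChi g b) (hc : IsChi g c) : b = c := by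
  obtain ⟨ι, _, a, K, h1, h2, h3, h4⟩ := hb.add hc.neg
  have := hadwiger a K h1 h2 (fun p => by rw [← h3]; ring)
  linarith

lemma isChi_convex {K : Set (E d)} (hK : IsCompact K) (hc : Convex ℝ K) (hn : K.Nonempty) :
    IsChi (ind K) 1 :=
  ⟨Unit, inferInstance, fun _ => 1, fun _ => K, fun _ => hK, fun _ => hc, by simp,
    by simp [ne1, hn]⟩

/-- Membership in the span. -/
def InSpan (A : Set (E d)) : Prop := ∃ c, IsChi (ind A) c

lemma inSpan_convex {K : Set (E d)} (hK : IsCompact K) (hc : Convex ℝ K) : InSpan K :=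
  ⟨_, Unit, inferInstance, fun _ => 1, fun _ => K, fun _ => hK, fun _ => hc, by simp, rfl⟩

lemma InSpan.inter {A T : Set (E d)} (hA : InSpan A) (hT : IsClosed T) (hc : Convex ℝ T) :
    InSpan (A ∩ T) := by
  obtain ⟨_, ι, _, a, K, h1, h2, h3, h4⟩ := hA
  refine ⟨_, ι, inferInstance, a, fun i => K i ∩ T, fun i => (h1 i).inter_right hT,
    fun i => (h2 i).inter hc, ?_, rfl⟩
  intro p
  simp [ind_inter, h3, Finset.sum_mul, mul_assoc]

lemma InSpan.diff {A T : Set (E d)} (hA : InSpan A) (hT : IsClosed T) (hc : Convex ℝ T) :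
    InSpan (A \ T) := by
  obtain ⟨b, hb⟩ := hA.inter hT hc
  obtain ⟨a, ha⟩ := hA
  refine ⟨a + -b, ?_⟩
  convert ha.add hb.neg using 1
  ext p
  by_cases h1 : p ∈ A <;> by_cases h2 : p ∈ T <;> simp [ind, h1, h2]

lemma InSpan.inter_finset {κ : Type*} (s : Finset κ) {T : κ → Set (E d)}
    (hT : ∀ i, IsClosed (T i)) (hc : ∀ i, Convex ℝ (T i)) {A : Set (E d)} (hA : InSpan A) :
    InSpan {p | p ∈ A ∧ ∀ i ∈ s, p ∈ T i} := by
  induction s using Finset.induction_on with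
  | empty => simpa using hA
  | insert j s hj ih =>
    convert ih.inter (hT j) (hc j) using 1
    ext p
    simp only [Finset.mem_insert, forall_eq_or_imp, mem_inter_iff, mem_ofPred_eq]
    tauto

lemma InSpan.diff_finset {κ : Type*} (s : Finset κ) {T : κ → Set (E d)}
    (hT : ∀ i, IsClosed (T i)) (hc : ∀ i, Convex ℝ (T i)) {A : Set (E d)} (hA : InSpan A) :
    InSpan {p | p ∈ A ∧ ∀ i ∈ s, p ∉ T i} := by
  induction s using Finset.induction_on with
  | empty => simpa using hA
  | insert j s hj ih =>
    convert ih.diff (hT j) (hc j) using 1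
    ext p
    simp only [Finset.mem_insert, forall_eq_or_imp, mem_sdiff, mem_ofPred_eq]
    tauto

/-- Relatively open in a translate of `V`. -/
def RelOpen (O : Set (E d)) (V : Submodule ℝ (E d)) : Prop :=
  (∀ p ∈ O, ∀ q ∈ O, p - q ∈ V) ∧
  (∀ p ∈ O, ∀ v ∈ V, ∀ᶠ s : ℝ in nhds 0, p + s • v ∈ O)

lemma RelOpen.inter_open {O U : Set (E d)} {V : Submodule ℝ (E d)} (h : RelOpen O V)
    (hU : IsOpen U) : RelOpen (O ∩ U) V := by
  refine ⟨fun p hp q hq => h.1 p hp.1 q hq.1, fun p hp v hv => ?_⟩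
  have h2 : ∀ᶠ s : ℝ in nhds 0, p + s • v ∈ U := by
    have hc : Continuous fun s : ℝ => p + s • v := by fun_prop
    exact hc.continuousAt.eventually_mem (hU.mem_nhds (by simpa using hp.2))
  filter_upwards [h.2 p hp.1 v hv, h2] with s h1 h2 using ⟨h1, h2⟩

lemma RelOpen.slice {O : Set (E d)} {V : Submodule ℝ (E d)} (h : RelOpen O V)
    (n : E d) (t : ℝ) : RelOpen (O ∩ {p | ⟪n, p⟫ = t}) (V ⊓ (ℝ ∙ n)ᗮ) := by
  constructor
  · rintro p ⟨hp, hp'⟩ q ⟨hq, hq'⟩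
    refine ⟨h.1 p hp q hq, ?_⟩
    simp only [mem_ofPred_eq] at hp' hq'
    rw [SetLike.mem_coe, Submodule.mem_orthogonal_singleton_iff_inner_right, inner_sub_right, hp', hq', sub_self]
  · rintro p ⟨hp, hp'⟩ v ⟨hv, hv'⟩
    filter_upwards [h.2 p hp v hv] with s hs
    refine ⟨hs, ?_⟩
    rw [SetLike.mem_coe, Submodule.mem_orthogonal_singleton_iff_inner_right] at hv'
    simp only [mem_ofPred_eq] at hp' ⊢
    rw [inner_add_right, inner_smul_right, hv', hp', mul_zero, add_zero]

lemma finrank_inf_orth (V : Submodule ℝ (E d)) (n v : E d) (hv : v ∈ V) (hnv : ⟪n, v⟫ ≠ 0) :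
    Module.finrank ℝ (V ⊓ (ℝ ∙ n)ᗮ : Submodule ℝ (E d)) + 1 = Module.finrank ℝ V := by
  let φ : V →ₗ[ℝ] ℝ := (innerSL ℝ n).toLinearMap.comp V.subtype
  have h1 := LinearMap.finrank_range_add_finrank_ker φ
  have h2 : LinearMap.range φ = ⊤ := by
    apply LinearMap.range_eq_top.2
    apply LinearMap.surjective
    intro h0
    apply hnv
    have := LinearMap.congr_fun h0 ⟨v, hv⟩
    simpa [φ] using this
  have h3 : (LinearMap.ker φ).map V.subtype = V ⊓ (ℝ ∙ n)ᗮ := by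
    ext w
    simp only [Submodule.mem_map, LinearMap.mem_ker, Submodule.mem_inf,
      Submodule.mem_orthogonal_singleton_iff_inner_right]
    constructor
    · rintro ⟨w, hw, rfl⟩
      exact ⟨w.2, by simpa [φ] using hw⟩
    · rintro ⟨hw, hw'⟩
      exact ⟨⟨w, hw⟩, by simpa [φ] using hw', rfl⟩
  rw [← h3, ← LinearEquiv.finrank_eq (Submodule.equivMapOfInjective V.subtype
    V.injective_subtype (LinearMap.ker φ))]
  rw [h2, finrank_top, Module.finrank_self] at h1
  omega

lemma convex_slice (n : E d) (t : ℝ) : Convex ℝ {p : E d | ⟪n, p⟫ = t} :=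
  convex_hyperplane ((innerSL ℝ n).toLinearMap.isLinear) t

lemma closed_slice (n : E d) (t : ℝ) : IsClosed {p : E d | ⟪n, p⟫ = t} :=
  isClosed_eq (by fun_prop) continuous_const

lemma relOpen_chi_aux (k : ℕ) : ∀ (O : Set (E d)) (V : Submodule ℝ (E d)), RelOpen O V →
    Convex ℝ O → Bornology.IsBounded O → O.Nonempty → Module.finrank ℝ V = k →
    ∀ c, IsChi (ind O) c → c = (-1) ^ k := by
  induction k with
  | zero =>
    intro O V hO _ _ ⟨p, hp⟩ hk c hc
    have hV : V = ⊥ := Submodule.finrank_eq_zero.1 hk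
    have : O = {p} := by
      ext q
      constructor
      · intro hq
        have := hO.1 q hq p hp
        rw [hV, Submodule.mem_bot, sub_eq_zero] at this
        exact this
      · rintro rfl; exact hp
    rw [this] at hc
    rw [pow_zero]
    exact hc.unique (isChi_convex isCompact_singleton (convex_singleton p) (singleton_nonempty p))
  | succ k ih =>
    intro O V hO hcv hbd hne hk c hc
    have hV : V ≠ ⊥ := by rintro rfl; simp at hk
    obtain ⟨n, hn, hn0⟩ := Submodule.exists_mem_ne_zero_of_ne_bot hV
    have hnn : ⟪n, n⟫ ≠ 0 := inner_self_ne_zero.2 hn0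
    have hnpos : 0 < ⟪n, n⟫ := lt_of_le_of_ne real_inner_self_nonneg hnn.symm
    have hfr := finrank_inf_orth V n n hn hnn
    -- the projection is an open bounded interval
    obtain ⟨α, β, hαβ, hI⟩ : ∃ α β : ℝ, α < β ∧ (fun p => ⟪n, p⟫) '' O = Ioo α β := by
      set S := (fun p => ⟪n, p⟫) '' O with hS
      have hSne : S.Nonempty := hne.image _
      have hSop : ∀ t ∈ S, ∃ ε > 0, t - ε ∈ S ∧ t + ε ∈ S := by
        rintro _ ⟨p, hp, rfl⟩
        have := hO.2 p hp n hn
        obtain ⟨ε, hε, hh⟩ := Metric.eventually_nhds_iff.1 this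
        have e1 := @hh (ε / 2) (by simp [abs_of_pos hε, hε])
        have e2 := @hh (-(ε / 2)) (by simp [abs_of_pos hε, hε])
        refine ⟨ε / 2 * ⟪n, n⟫, by positivity, ⟨_, e2, ?_⟩, ⟨_, e1, ?_⟩⟩ <;>
        · simp only [inner_add_right, inner_smul_right, neg_mul, sub_eq_add_neg]
      have hSb : Bornology.IsBounded S := by
        have := (innerSL ℝ n).lipschitz.isBounded_image hbd
        exact this
      have hSc : Convex ℝ S := hcv.linear_image (innerSL ℝ n).toLinearMap
      have hbb := hSb.bddBelow
      have hba := hSb.bddAbove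
      have hlt1 : ∀ t ∈ S, sInf S < t := fun t ht => by
        obtain ⟨ε, hε, h1, h2⟩ := hSop t ht
        have := csInf_le hbb h1
        linarith
      have hlt2 : ∀ t ∈ S, t < sSup S := fun t ht => by
        obtain ⟨ε, hε, h1, h2⟩ := hSop t ht
        have := le_csSup hba h2
        linarith
      refine ⟨sInf S, sSup S, ?_, ?_⟩
      · obtain ⟨t, ht⟩ := hSne
        exact (hlt1 t ht).trans (hlt2 t ht)
      · ext t
        constructor
        · intro ht; exact ⟨hlt1 t ht, hlt2 t ht⟩
        · rintro ⟨h1, h2⟩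
          obtain ⟨a, ha, ha'⟩ := exists_lt_of_csInf_lt hSne h1
          obtain ⟨b, hb, hb'⟩ := exists_lt_of_lt_csSup hSne h2
          exact hSc.ordConnected.out ha hb ⟨ha'.le, hb'.le⟩
    obtain ⟨ι, _, a, K, h1, h2, h3, h4⟩ := hc
    have hslice : ∀ t, IsChi (ind (O ∩ {p | ⟪n, p⟫ = t}))
        (∑ i, a i * ne1 (K i ∩ {p | (innerSL ℝ n) p = t})) := by
      intro t
      refine ⟨ι, inferInstance, a, fun i => K i ∩ {p | (innerSL ℝ n) p = t},
        fun i => (h1 i).inter_right (closed_slice n t), fun i => (h2 i).inter (convex_slice n t),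
        ?_, rfl⟩
      intro p
      simp [ind_inter, h3, Finset.sum_mul, mul_assoc]
    have := fubini (κ := Fin 3) a K h1 h2 (innerSL ℝ n) (fun j => if j = 0 then (-1) ^ k
      else - (-1) ^ k) (![Icc α β, {α}, {β}]) ?_ ?_ ?_
    · rw [h4, this]
      simp [Fin.sum_univ_three, ne1, hαβ.le]
      ring
    · intro i; fin_cases i
      · exact isCompact_Icc
      · exact isCompact_singleton
      · exact isCompact_singleton
    · intro i; fin_cases i
      · exact convex_Icc _ _
      · exact convex_singleton _
      · exact convex_singleton _
    · intro t
      by_cases ht : t ∈ Ioo α β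
      · have hne' : (O ∩ {p | ⟪n, p⟫ = t}).Nonempty := by
          rw [← hI] at ht
          obtain ⟨p, hp, hp'⟩ := ht
          exact ⟨p, hp, hp'⟩
        rw [ih _ _ (hO.slice n t) (hcv.inter (convex_slice n t)) (hbd.subset inter_subset_left)
          hne' (by omega) _ (hslice t)]
        simp [Fin.sum_univ_three, ind, ht.1.le, ht.2.le, ht.1.ne', ht.2.ne]
      · have he : O ∩ {p | ⟪n, p⟫ = t} = ∅ := by
          rw [eq_empty_iff_forall_notMem]
          rintro p ⟨hp, hp'⟩
          apply ht
          rw [← hI]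
          exact ⟨p, hp, hp'⟩
        have h0 := hslice t
        rw [he] at h0
        have h00 : IsChi (ind (∅ : Set (E d))) 0 := by
          convert IsChi.zero using 1
          ext p; simp [ind]
        rw [h0.unique h00]
        rcases lt_trichotomy t α with h | h | h
        · simp [Fin.sum_univ_three, ind, h.not_ge, h.ne, (h.trans hαβ).ne]
        · subst h
          simp [Fin.sum_univ_three, ind, hαβ.le, hαβ.ne]
        rcases lt_trichotomy t β with h' | h' | h'
        · exact absurd ⟨h, h'⟩ ht
        · subst h'
          simp [Fin.sum_univ_three, ind, hαβ.le, hαβ.ne']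
        · simp [Fin.sum_univ_three, ind, h'.not_ge, h'.ne', (hαβ.trans h').ne']

lemma relOpen_chi {O : Set (E d)} {V : Submodule ℝ (E d)} (hO : RelOpen O V)
    (hcv : Convex ℝ O) (hbd : Bornology.IsBounded O) (hne : O.Nonempty) (hs : InSpan O) :
    IsChi (ind O) ((-1) ^ Module.finrank ℝ V) := by
  obtain ⟨c, hc⟩ := hs
  rwa [← relOpen_chi_aux _ O V hO hcv hbd hne rfl c hc]

/-- If all fibres of a linear map have Euler characteristic zero, so has the whole. -/
lemma fiber_zero {ι : Type} [Fintype ι] (a : ι → ℤ) (K : ι → Set (E d))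
    (hK : ∀ i, IsCompact (K i)) (hc : ∀ i, Convex ℝ (K i)) (L : E d →L[ℝ] E d)
    (h : ∀ z, ∑ i, a i * ne1 (K i ∩ {p | L p = z}) = 0) :
    ∑ i, a i * ne1 (K i) = 0 := by
  have := hadwiger a (fun i => L '' K i) (fun i => (hK i).image L.continuous)
    (fun i => (hc i).linear_image L.toLinearMap) ?_
  · rw [← this]
    refine Finset.sum_congr rfl fun i _ => ?_
    congr 1
    exact ne1_congr (by simp)
  · intro z
    rw [← h z]
    refine Finset.sum_congr rfl fun i _ => ?_
    congr 1

/-- If `Y` meets every line of direction `b` in a half-open interval, its Euler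
characteristic vanishes. -/
lemma halfopen_zero {Y : Set (E d)} {c : ℤ} (hY : IsChi (ind Y) c) (n b : E d)
    (hnb : ⟪n, b⟫ = 1)
    (h : ∀ z : E d, ⟪n, z⟫ = 0 → ∃ α β : ℝ, α ≤ β ∧ ∀ t : ℝ, z + t • b ∈ Y ↔ t ∈ Ico α β) :
    c = 0 := by
  obtain ⟨ι, _, a, K, h1, h2, h3, h4⟩ := hY
  rw [h4]
  let L : E d →L[ℝ] E d := ContinuousLinearMap.id ℝ (E d) - (innerSL ℝ n).smulRight b
  have hL : ∀ p, L p = p - ⟪n, p⟫ • b := fun p => by simp [L]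
  apply fiber_zero a K h1 h2 L
  intro z
  by_cases hz : ⟪n, z⟫ = 0
  · obtain ⟨α, β, hαβ, hh⟩ := h z hz
    have hcl : IsClosed {p | L p = z} := isClosed_eq L.continuous continuous_const
    have hcv : Convex ℝ {p | L p = z} := by
      have : Convex ℝ (L.toLinearMap ⁻¹' {z}) := (convex_singleton z).linear_preimage L.toLinearMap
      exact this
    have := fubini (κ := Bool) a (fun i => K i ∩ {p | L p = z})
      (fun i => (h1 i).inter_right hcl) (fun i => (h2 i).inter hcv) (innerSL ℝ n)
      (fun j => if j then 1 else -1) (fun j => if j then Icc α β else {β}) ?_ ?_ ?_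
    · rw [this]
      simp [ne1, hαβ]
    · intro i; cases i
      · simp
      · simpa using isCompact_Icc
    · intro i; cases i
      · simp
      · simpa using convex_Icc α β
    · intro t
      have e : ∀ i, ne1 (K i ∩ {p | L p = z} ∩ {p | (innerSL ℝ n) p = t}) =
          ind (K i) (z + t • b) := by
        intro i
        apply ne1_eq_ind
        constructor
        · rintro ⟨p, ⟨hp, hp'⟩, hp''⟩
          have e1 : ⟪n, p⟫ = t := hp''
          have e2 : p - ⟪n, p⟫ • b = z := by rw [← hL]; exact hp'
          rw [← e2, e1]
          simpa using hp
        · intro hp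
          refine ⟨_, ⟨hp, ?_⟩, ?_⟩
          · simp only [mem_ofPred_eq, hL, inner_add_right, inner_smul_right, hz, hnb]
            simp
          · simp only [mem_ofPred_eq, innerSL_apply_apply, inner_add_right, inner_smul_right, hz, hnb]
            simp
      simp_rw [e]
      rw [← h3]
      have e3 : ind Y (z + t • b) = ind (Ico α β) t := by
        by_cases h6 : t ∈ Ico α β
        · have := (hh t).2 h6
          unfold ind; rw [if_pos this, if_pos h6]
        · have := mt (hh t).1 h6
          unfold ind; rw [if_neg this, if_neg h6]
      rw [e3]
      simp only [Fintype.sum_bool, ind]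
      rcases lt_trichotomy t β with h' | h' | h'
      · by_cases h5 : α ≤ t <;> simp [h', h'.le, h'.ne, h5]
      · subst h'; simp [hαβ]
      · simp [h'.not_ge, h'.ne', h'.not_gt]
  · have : ∀ i, K i ∩ {p | L p = z} = ∅ := by
      intro i
      rw [eq_empty_iff_forall_notMem]
      rintro p ⟨hp, hp'⟩
      apply hz
      have : L p = z := hp'
      rw [← this, hL, inner_sub_right, inner_smul_right, hnb]; ring
    simp [this, ne1]

/-! ### Strata of a polyhedron -/

def poly {m : ℕ} (y : Fin m → E d) (c : Fin m → ℝ) : Set (E d) := {z | ∀ i, ⟪z, y i⟫ ≤ c i}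

def act {m : ℕ} (y : Fin m → E d) (c : Fin m → ℝ) (p : E d) : Finset (Fin m) :=
  Finset.univ.filter fun i => ⟪p, y i⟫ = c i

def fc {m : ℕ} (y : Fin m → E d) (c : Fin m → ℝ) (I : Finset (Fin m)) : Set (E d) :=
  {p | p ∈ poly y c ∧ ∀ i ∈ I, ⟪p, y i⟫ = c i}

def st {m : ℕ} (y : Fin m → E d) (c : Fin m → ℝ) (I : Finset (Fin m)) : Set (E d) :=
  {p | (∀ i ∈ I, ⟪p, y i⟫ = c i) ∧ ∀ i ∉ I, ⟪p, y i⟫ < c i}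

def Vs {m : ℕ} (y : Fin m → E d) (I : Finset (Fin m)) : Submodule ℝ (E d) where
  carrier := {v | ∀ i ∈ I, ⟪v, y i⟫ = 0}
  add_mem' := by
    intro a b ha hb i hi
    rw [inner_add_left, ha i hi, hb i hi, add_zero]
  zero_mem' := by intro i _; simp
  smul_mem' := by
    intro r a ha i hi
    rw [inner_smul_left, ha i hi, mul_zero]

def strata {m : ℕ} (y : Fin m → E d) (c : Fin m → ℝ) : Finset (Finset (Fin m)) :=
  Finset.univ.filter fun I => (st y c I).Nonempty

section strata

variable {m : ℕ} {y : Fin m → E d} {c : Fin m → ℝ}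

lemma st_subset_fc (I : Finset (Fin m)) : st y c I ⊆ fc y c I := by
  rintro p ⟨h1, h2⟩
  refine ⟨fun i => ?_, h1⟩
  by_cases hi : i ∈ I
  · exact (h1 i hi).le
  · exact (h2 i hi).le

lemma mem_st_act {p : E d} (hp : p ∈ poly y c) : p ∈ st y c (act y c p) := by
  constructor
  · intro i hi; simpa [act] using hi
  · intro i hi
    exact lt_of_le_of_ne (hp i) (by simpa [act] using hi)

lemma act_of_mem_st {p : E d} {I : Finset (Fin m)} (hp : p ∈ st y c I) : act y c p = I := by
  ext i
  simp only [act, Finset.mem_filter, Finset.mem_univ, true_and]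
  constructor
  · intro h
    by_contra hi
    exact (hp.2 i hi).ne h
  · exact hp.1 i

lemma mem_fc_iff {p : E d} (hp : p ∈ poly y c) {I : Finset (Fin m)} :
    p ∈ fc y c I ↔ I ⊆ act y c p := by
  simp [fc, hp, act, Finset.subset_iff]

lemma closed_ge (w : E d) (r : ℝ) : IsClosed {p : E d | r ≤ ⟪w, p⟫} :=
  isClosed_le continuous_const (by fun_prop)

lemma convex_ge (w : E d) (r : ℝ) : Convex ℝ {p : E d | r ≤ ⟪w, p⟫} :=
  convex_halfSpace_ge ((innerSL ℝ w).toLinearMap.isLinear) r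

lemma convex_lt (w : E d) (r : ℝ) : Convex ℝ {p : E d | ⟪w, p⟫ < r} :=
  convex_halfSpace_lt ((innerSL ℝ w).toLinearMap.isLinear) r

lemma open_lt (w : E d) (r : ℝ) : IsOpen {p : E d | ⟪w, p⟫ < r} :=
  isOpen_lt (by fun_prop) continuous_const

lemma poly_closed : IsClosed (poly y c) := by
  simp only [poly, ofPred_forall]
  exact isClosed_iInter fun i => isClosed_le (by fun_prop) continuous_const

lemma poly_convex : Convex ℝ (poly y c) := by
  simp only [poly, ofPred_forall]
  refine convex_iInter fun i => ?_
  have e : {x : E d | ⟪x, y i⟫ ≤ c i} = {p | (innerSL ℝ (y i)).toLinearMap p ≤ c i} := by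
    ext p
    simp [real_inner_comm]
  rw [e]
  exact convex_halfSpace_le ((innerSL ℝ (y i)).toLinearMap.isLinear) (c i)

lemma fc_closed (I : Finset (Fin m)) : IsClosed (fc y c I) := by
  have : fc y c I = poly y c ∩ ⋂ i ∈ I, {p | ⟪y i, p⟫ = c i} := by
    ext p; simp [fc, real_inner_comm p]
  rw [this]
  exact poly_closed.inter (isClosed_iInter fun i => isClosed_iInter fun _ => closed_slice _ _)

lemma fc_convex (I : Finset (Fin m)) : Convex ℝ (fc y c I) := by
  have : fc y c I = poly y c ∩ ⋂ i ∈ I, {p | ⟪y i, p⟫ = c i} := by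
    ext p; simp [fc, real_inner_comm p]
  rw [this]
  exact poly_convex.inter (convex_iInter fun i => convex_iInter fun _ => convex_slice _ _)

lemma st_convex (I : Finset (Fin m)) : Convex ℝ (st y c I) := by
  have : st y c I = (⋂ i ∈ I, {p | ⟪y i, p⟫ = c i}) ∩ ⋂ i ∈ Iᶜ, {p | ⟪y i, p⟫ < c i} := by
    ext p; simp [st, real_inner_comm p]
  rw [this]
  exact (convex_iInter fun i => convex_iInter fun _ => convex_slice _ _).inter
    (convex_iInter fun i => convex_iInter fun _ => convex_lt _ _)

lemma st_inSpan (hc : IsCompact (poly y c)) (I : Finset (Fin m)) : InSpan (st y c I) := by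
  have h1 := (inSpan_convex hc poly_convex).inter_finset I (T := fun i => {p | c i ≤ ⟪y i, p⟫})
    (fun i => closed_ge _ _) (fun i => convex_ge _ _)
  have h2 := h1.diff_finset Iᶜ (T := fun i => {p | c i ≤ ⟪y i, p⟫})
    (fun i => closed_ge _ _) (fun i => convex_ge _ _)
  convert h2 using 1
  ext p
  simp only [mem_ofPred_eq, Finset.mem_compl, not_le, real_inner_comm p]
  constructor
  · intro h
    exact ⟨⟨(st_subset_fc I h).1, fun i hi => (h.1 i hi).ge⟩, h.2⟩
  · rintro ⟨⟨h1, h2⟩, h3⟩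
    exact ⟨fun i hi => le_antisymm (h1 i) (h2 i hi), h3⟩

lemma st_relOpen (I : Finset (Fin m)) : RelOpen (st y c I) (Vs y I) := by
  constructor
  · intro p hp q hq i hi
    rw [inner_sub_left, hp.1 i hi, hq.1 i hi, sub_self]
  · intro p hp v hv
    have h2 : ∀ i, ∀ᶠ s : ℝ in nhds 0, i ∉ I → ⟪p + s • v, y i⟫ < c i := by
      intro i
      by_cases hi : i ∈ I
      · simp [hi]
      have hcont : Continuous fun s : ℝ => ⟪p + s • v, y i⟫ := by fun_prop
      have : ∀ᶠ s : ℝ in nhds 0, ⟪p + s • v, y i⟫ < c i :=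
        hcont.continuousAt.eventually_lt_const (by simpa using hp.2 i hi)
      filter_upwards [this] with s hs _ using hs
    filter_upwards [Filter.eventually_all.2 h2] with s hs
    refine ⟨fun i hi => ?_, hs⟩
    rw [inner_add_left, inner_smul_left, hv i hi, hp.1 i hi]
    simp

lemma ind_sum_strata {A : Set (E d)} (hA : A ⊆ poly y c) (p : E d) :
    ind A p = ∑ I ∈ strata y c, ind (st y c I ∩ A) p := by
  by_cases hp : p ∈ A
  · rw [Finset.sum_eq_single (act y c p)]
    · have := mem_st_act (hA hp)
      simp [ind, hp, this]
    · intro I _ hI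
      have : p ∉ st y c I := fun h => hI (act_of_mem_st h).symm
      simp [ind, this]
    · intro h
      exact absurd (by simpa [strata] using ⟨p, mem_st_act (hA hp)⟩) h
  · simp [ind, hp]

lemma poly_euler (hc : IsCompact (poly y c)) (hne : (poly y c).Nonempty) :
    ∑ I ∈ strata y c, (-1 : ℤ) ^ Module.finrank ℝ (Vs y I) = 1 := by
  have h1 := isChi_convex hc poly_convex hne
  refine IsChi.unique ?_ h1
  have h2 : IsChi (fun p => ∑ I ∈ strata y c, ind (st y c I) p)
      (∑ I ∈ strata y c, (-1 : ℤ) ^ Module.finrank ℝ (Vs y I)) := by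
    apply IsChi.sum
    intro I hI
    exact relOpen_chi (st_relOpen I) (st_convex I)
      (hc.isBounded.subset fun p hp => (st_subset_fc I hp).1) (by simpa [strata] using hI)
      (st_inSpan hc I)
  convert h2 using 1
  ext p
  rw [ind_sum_strata subset_rfl]
  refine Finset.sum_congr rfl fun I _ => ?_
  rw [inter_eq_left.2 fun p hp => (st_subset_fc I hp).1]

lemma st_mix {I : Finset (Fin m)} {f p : E d} (hf : f ∈ fc y c I) (hp : p ∈ st y c I) {s : ℝ}
    (hs : 0 < s) (hs1 : s ≤ 1) : f + s • (p - f) ∈ st y c I := by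
  constructor
  · intro i hi
    simp only [inner_add_left, inner_smul_left, inner_sub_left, hp.1 i hi, hf.2 i hi]
    simp
  · intro i hi
    have h1 := hp.2 i hi
    have h2 := hf.1 i
    simp only [inner_add_left, inner_smul_left, inner_sub_left, conj_trivial]
    nlinarith

lemma lat_lt {A τ δ β r t : ℝ} (h1 : A + (τ + δ) * β < r) (h2 : A + (τ - δ) * β < r)
    (ht1 : τ - δ ≤ t) (ht2 : t ≤ τ + δ) : A + t * β < r := by
  rcases le_total 0 β with h | h <;> nlinarith

set_option maxHeartbeats 1600000 in
lemma local_zero (hc : IsCompact (poly y c)) {f n q : E d} (hf : f ∈ poly y c)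
    (hq : q ∈ poly y c) (hn : 0 < ⟪n, q - f⟫) :
    ∑ I ∈ strata y c with f ∈ fc y c I ∧ ∀ g ∈ fc y c I, 0 ≤ ⟪n, g - f⟫,
      (-1 : ℤ) ^ Module.finrank ℝ (Vs y I) = 0 := by
  set b : E d := (⟪n, q - f⟫)⁻¹ • (q - f) with hb
  have hnb : ⟪n, b⟫ = 1 := by rw [hb, inner_smul_right, inv_mul_cancel₀ hn.ne']
  set τ : ℝ := ⟪n, f⟫ with hτ
  have hbact : ∀ i ∈ act y c f, ⟪b, y i⟫ ≤ 0 := by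
    intro i hi
    have h1 : ⟪f, y i⟫ = c i := by simpa [act] using hi
    have h2 := hq i
    rw [hb, inner_smul_left, inner_sub_left, h1]
    apply mul_nonpos_of_nonneg_of_nonpos
    · simpa using hn.le
    · linarith
  let w : Fin m → E d := fun i => y i - ⟪b, y i⟫ • n
  have hw : ∀ i p, ⟪p, y i⟫ = ⟪w i, p⟫ + ⟪n, p⟫ * ⟪b, y i⟫ := by
    intro i p
    simp only [w, inner_sub_left, inner_smul_left, conj_trivial]
    rw [real_inner_comm p (y i)]
    ring
  have hwb : ∀ i, ⟪w i, b⟫ = 0 := by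
    intro i
    have := hw i b
    rw [hnb] at this
    linarith
  let U : ℝ → Set (E d) := fun δ => {p | ⟪n, p⟫ < τ + δ} ∩ ⋂ i ∈ (act y c f)ᶜ,
    ({p | ⟪w i, p⟫ < c i - (τ + δ) * ⟪b, y i⟫} ∩ {p | ⟪w i, p⟫ < c i - (τ - δ) * ⟪b, y i⟫})
  have hUmem : ∀ δ p, p ∈ U δ ↔ ⟪n, p⟫ < τ + δ ∧ ∀ i, i ∉ act y c f →
      ⟪w i, p⟫ + (τ + δ) * ⟪b, y i⟫ < c i ∧ ⟪w i, p⟫ + (τ - δ) * ⟪b, y i⟫ < c i := by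
    intro δ p
    simp only [U, mem_inter_iff, mem_ofPred_eq, mem_iInter, Finset.mem_compl, lt_sub_iff_add_lt]
  have hUopen : ∀ δ, IsOpen (U δ) := fun δ =>
    (open_lt _ _).inter (isOpen_biInter_finset fun i _ => (open_lt _ _).inter (open_lt _ _))
  have hUconv : ∀ δ, Convex ℝ (U δ) := fun δ => (convex_lt _ _).inter
    (convex_iInter fun i => convex_iInter fun _ => (convex_lt _ _).inter (convex_lt _ _))
  have hUspan : ∀ δ A, InSpan A → InSpan (A ∩ U δ) := by
    intro δ A hA
    have h1 := hA.diff (closed_ge n (τ + δ)) (convex_ge n (τ + δ))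
    have h2 := h1.diff_finset (act y c f)ᶜ
      (T := fun i => {p | c i - (τ + δ) * ⟪b, y i⟫ ≤ ⟪w i, p⟫})
      (fun i => closed_ge _ _) (fun i => convex_ge _ _)
    have h3 := h2.diff_finset (act y c f)ᶜ
      (T := fun i => {p | c i - (τ - δ) * ⟪b, y i⟫ ≤ ⟪w i, p⟫})
      (fun i => closed_ge _ _) (fun i => convex_ge _ _)
    convert h3 using 1
    ext p
    rw [mem_inter_iff, hUmem]
    simp only [mem_ofPred_eq, Finset.mem_compl, not_le, mem_sdiff, lt_sub_iff_add_lt]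
    constructor
    · rintro ⟨h1, h2, h3⟩
      exact ⟨⟨⟨h1, h2⟩, fun i hi => (h3 i hi).1⟩, fun i hi => (h3 i hi).2⟩
    · rintro ⟨⟨⟨h1, h2⟩, h3⟩, h4⟩
      exact ⟨h1, h2, fun i hi => ⟨h3 i hi, h4 i hi⟩⟩
  have hUlat : ∀ δ p, p ∈ U δ → τ - δ ≤ ⟪n, p⟫ → ∀ i, i ∉ act y c f → ⟪p, y i⟫ < c i := by
    intro δ p hp hp' i hi
    rw [hUmem] at hp
    rw [hw]
    exact lat_lt (hp.2 i hi).1 (hp.2 i hi).2 hp' hp.1.le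
  -- points near `f`
  have hUev : ∀ v : E d, ⟪n, v⟫ < 1 → ∀ᶠ δ in nhdsWithin (0 : ℝ) (Ioi 0), f + δ • v ∈ U δ := by
    intro v hv
    have hpos : ∀ᶠ δ in nhdsWithin (0 : ℝ) (Ioi 0), 0 < δ := self_mem_nhdsWithin
    have h2 : ∀ i, ∀ᶠ δ in nhdsWithin (0 : ℝ) (Ioi 0), i ∉ act y c f →
      ⟪w i, f + δ • v⟫ + (τ + δ) * ⟪b, y i⟫ < c i ∧
      ⟪w i, f + δ • v⟫ + (τ - δ) * ⟪b, y i⟫ < c i := by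
      intro i
      by_cases hi : i ∈ act y c f
      · simp [hi]
      have hlt : ⟪w i, f⟫ + τ * ⟪b, y i⟫ < c i := by
        rw [hτ, ← hw]; exact (mem_st_act hf).2 i hi
      have c1 : Continuous fun δ : ℝ => ⟪w i, f + δ • v⟫ + (τ + δ) * ⟪b, y i⟫ := by fun_prop
      have c2 : Continuous fun δ : ℝ => ⟪w i, f + δ • v⟫ + (τ - δ) * ⟪b, y i⟫ := by fun_prop
      have e1 := (c1.tendsto 0).eventually_lt_const (u := c i) (by simpa using hlt)
      have e2 := (c2.tendsto 0).eventually_lt_const (u := c i) (by simpa using hlt)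
      filter_upwards [nhdsWithin_le_nhds e1, nhdsWithin_le_nhds e2] with δ h1 h2 _ using ⟨h1, h2⟩
    filter_upwards [hpos, Filter.eventually_all.2 h2] with δ hδ h3
    rw [hUmem]
    refine ⟨?_, h3⟩
    rw [inner_add_right, inner_smul_right]
    nlinarith
  have hstev : ∀ I, f ∈ fc y c I → ∀ p ∈ st y c I, ∀ r : ℝ, 0 < r →
      ∀ᶠ δ in nhdsWithin (0 : ℝ) (Ioi 0), f + δ • (r • (p - f)) ∈ st y c I := by
    intro I hI p hp r hr
    have hpos : ∀ᶠ δ in nhdsWithin (0 : ℝ) (Ioi 0), 0 < δ := self_mem_nhdsWithin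
    have hlt : ∀ᶠ δ in nhdsWithin (0 : ℝ) (Ioi 0), δ < r⁻¹ :=
      nhdsWithin_le_nhds (Iio_mem_nhds (by positivity))
    filter_upwards [hpos, hlt] with δ h1 h2
    rw [smul_smul]
    refine st_mix hI hp (by positivity) ?_
    have := mul_lt_mul_of_pos_right h2 hr
    rw [inv_mul_cancel₀ hr.ne'] at this
    exact this.le
  have hev1 : ∀ I ∈ strata y c, f ∈ fc y c I → ∀ᶠ δ in nhdsWithin (0 : ℝ) (Ioi 0),
      (st y c I ∩ (U δ ∩ {p | ⟪-n, p⟫ < -(τ - δ)})).Nonempty := by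
    intro I hI hfI
    obtain ⟨p, hp⟩ : (st y c I).Nonempty := by simpa [strata] using hI
    set r : ℝ := (|⟪n, p - f⟫| + 1)⁻¹ with hr
    have hr0 : 0 < r := by positivity
    have habs : |⟪n, r • (p - f)⟫| < 1 := by
      rw [inner_smul_right, abs_mul, abs_of_pos hr0, hr, inv_mul_lt_iff₀ (by positivity)]
      linarith
    have hpos : ∀ᶠ δ in nhdsWithin (0 : ℝ) (Ioi 0), 0 < δ := self_mem_nhdsWithin
    filter_upwards [hpos, hUev _ (abs_lt.1 habs).2, hstev I hfI p hp r hr0] with δ h1 h2 h3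
    refine ⟨_, h3, h2, ?_⟩
    have := (abs_lt.1 habs).1
    simp only [mem_ofPred_eq, inner_neg_left, neg_lt_neg_iff]
    rw [inner_add_right, inner_smul_right _ _ δ]
    nlinarith
  have hev2 : ∀ I ∈ strata y c, f ∈ fc y c I → (¬ ∀ g ∈ fc y c I, 0 ≤ ⟪n, g - f⟫) →
      ∀ᶠ δ in nhdsWithin (0 : ℝ) (Ioi 0),
      (st y c I ∩ U δ ∩ {p | ⟪n, p⟫ = τ - δ}).Nonempty := by
    intro I hI hfI hcond
    push Not at hcond
    obtain ⟨g, hg, hg'⟩ := hcond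
    obtain ⟨p, hp⟩ : (st y c I).Nonempty := by simpa [strata] using hI
    obtain ⟨p1, hp1, hp1'⟩ : ∃ p1 ∈ st y c I, ⟪n, p1 - f⟫ < 0 := by
      have hpos : ∀ᶠ δ in nhdsWithin (0 : ℝ) (Ioi 0), 0 < δ := self_mem_nhdsWithin
      have hlt : ∀ᶠ δ in nhdsWithin (0 : ℝ) (Ioi 0), δ < 1 :=
        nhdsWithin_le_nhds (Iio_mem_nhds (by positivity))
      have c1 : Continuous fun s : ℝ => ⟪n, g + s • (p - g) - f⟫ := by fun_prop
      have e1 := (c1.tendsto 0).eventually_lt_const (u := 0) (by simpa using hg')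
      obtain ⟨s, h1, h2, h3⟩ := (hpos.and (hlt.and (nhdsWithin_le_nhds e1))).exists
      exact ⟨_, st_mix hg hp h1 h2.le, h3⟩
    set r : ℝ := (-⟪n, p1 - f⟫)⁻¹ with hr
    have hr0 : 0 < r := by rw [hr, inv_pos]; linarith
    have hm1 : ⟪n, r • (p1 - f)⟫ = -1 := by
      have : ⟪n, p1 - f⟫ ≠ 0 := hp1'.ne
      rw [inner_smul_right, hr]
      field_simp
    filter_upwards [hUev _ (by rw [hm1]; norm_num), hstev I hfI p1 hp1 r hr0] with δ h2 h3
    refine ⟨_, ⟨h3, h2⟩, ?_⟩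
    simp only [mem_ofPred_eq]
    rw [inner_add_right, inner_smul_right _ _ δ, hm1]
    ring
  have hpos : ∀ᶠ δ in nhdsWithin (0 : ℝ) (Ioi 0), 0 < δ := self_mem_nhdsWithin
  have hE1 : ∀ᶠ δ in nhdsWithin (0 : ℝ) (Ioi 0), ∀ I, I ∈ strata y c → f ∈ fc y c I →
      (st y c I ∩ (U δ ∩ {p | ⟪-n, p⟫ < -(τ - δ)})).Nonempty := by
    rw [Filter.eventually_all]
    intro I
    by_cases h1 : I ∈ strata y c
    · by_cases h2 : f ∈ fc y c I
      · filter_upwards [hev1 I h1 h2] with δ h _ _ using h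
      · simp [h2]
    · simp [h1]
  have hE2 : ∀ᶠ δ in nhdsWithin (0 : ℝ) (Ioi 0), ∀ I, I ∈ strata y c → f ∈ fc y c I →
      (¬ ∀ g ∈ fc y c I, 0 ≤ ⟪n, g - f⟫) →
      (st y c I ∩ U δ ∩ {p | ⟪n, p⟫ = τ - δ}).Nonempty := by
    rw [Filter.eventually_all]
    intro I
    by_cases h1 : I ∈ strata y c
    · by_cases h2 : f ∈ fc y c I
      · by_cases h3 : (¬ ∀ g ∈ fc y c I, 0 ≤ ⟪n, g - f⟫)
        · filter_upwards [hev2 I h1 h2 h3] with δ h _ _ _ using h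
        · exact Filter.Eventually.of_forall fun δ _ _ h => absurd h h3
      · simp [h2]
    · simp [h1]
  obtain ⟨δ, hδ, hN1, hN2⟩ := (hpos.and (hE1.and hE2)).exists
  let Y : Set (E d) := poly y c ∩ U δ ∩ {p | τ - δ ≤ ⟪n, p⟫}
  have hYP : Y ⊆ poly y c := fun p hp => hp.1.1
  have hempty : IsChi (ind (∅ : Set (E d))) 0 := by
    convert IsChi.zero using 1
    ext p; simp [ind]
  have hpiece : ∀ I ∈ strata y c, IsChi (ind (st y c I ∩ Y))
      (if f ∈ fc y c I ∧ ∀ g ∈ fc y c I, 0 ≤ ⟪n, g - f⟫ then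
        (-1 : ℤ) ^ Module.finrank ℝ (Vs y I) else 0) := by
    intro I hI
    have hstP : st y c I ⊆ poly y c := fun p hp => (st_subset_fc I hp).1
    have hstb : Bornology.IsBounded (st y c I) := hc.isBounded.subset hstP
    by_cases hfI : f ∈ fc y c I
    · have hsp : InSpan (st y c I ∩ U δ) := hUspan δ _ (st_inSpan hc I)
      have hop2 : IsOpen (U δ ∩ {p | ⟪-n, p⟫ < -(τ - δ)}) := (hUopen δ).inter (open_lt _ _)
      have hchi1 : IsChi (ind (st y c I ∩ (U δ ∩ {p | ⟪-n, p⟫ < -(τ - δ)})))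
          ((-1 : ℤ) ^ Module.finrank ℝ (Vs y I)) := by
        refine relOpen_chi ((st_relOpen I).inter_open hop2)
          ((st_convex I).inter ((hUconv δ).inter (convex_lt _ _)))
          (hstb.subset inter_subset_left) (hN1 I hI hfI) ?_
        convert hsp.diff (closed_ge (-n) (-(τ - δ))) (convex_ge _ _) using 1
        ext p
        simp only [mem_inter_iff, mem_ofPred_eq, mem_sdiff, not_le, and_assoc]
      have hchi2 : IsChi (ind (st y c I ∩ U δ ∩ {p | ⟪n, p⟫ = τ - δ}))
          (if ∀ g ∈ fc y c I, 0 ≤ ⟪n, g - f⟫ then 0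
            else - (-1 : ℤ) ^ Module.finrank ℝ (Vs y I)) := by
        by_cases hcond : ∀ g ∈ fc y c I, 0 ≤ ⟪n, g - f⟫
        · rw [if_pos hcond]
          convert hempty using 2
          rw [eq_empty_iff_forall_notMem]
          rintro p ⟨⟨hp, -⟩, hp'⟩
          have h1 := hcond p (st_subset_fc I hp)
          have h2 : ⟪n, p⟫ = τ - δ := hp'
          rw [inner_sub_right] at h1
          linarith
        · rw [if_neg hcond]
          have := relOpen_chi (((st_relOpen I).inter_open (hUopen δ)).slice n (τ - δ))
            (((st_convex I).inter (hUconv δ)).inter (convex_slice _ _))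
            (hstb.subset (inter_subset_left.trans inter_subset_left)) (hN2 I hI hfI hcond)
            (hsp.inter (closed_slice _ _) (convex_slice _ _))
          obtain ⟨p, ⟨hp, -⟩, hp'⟩ := hN2 I hI hfI hcond
          have hp'' : ⟪n, p⟫ = τ - δ := hp'
          have hfr := finrank_inf_orth (Vs y I) n (p - f)
            (fun i hi => by rw [inner_sub_left, hp.1 i hi, hfI.2 i hi, sub_self])
            (by rw [inner_sub_right, hp'', ← hτ]; linarith)
          rw [← hfr, pow_succ]
          simpa using this
      convert hchi1.add hchi2 using 1
      · ext p
        by_cases h1 : p ∈ st y c I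
        · have h1' := hstP h1
          by_cases h2 : p ∈ U δ
          · rcases lt_trichotomy ⟪n, p⟫ (τ - δ) with h3 | h3 | h3
            · have h4 : ¬ (τ < ⟪n, p⟫ + δ) := by linarith
              simp [ind, Y, h1, h2, h1', h3.ne, h3.not_ge, sub_lt_iff_lt_add, h4]
              linarith
            · simp [ind, Y, h1, h2, h1', h3]
            · have h4 : τ < ⟪n, p⟫ + δ := by linarith
              simp [ind, Y, h1, h2, h1', h3.ne', h3.le, sub_lt_iff_lt_add, h4]
              linarith
          · simp [ind, Y, h2]
        · simp [ind, h1]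
      · by_cases hcond : ∀ g ∈ fc y c I, 0 ≤ ⟪n, g - f⟫
        · rw [if_pos ⟨hfI, hcond⟩, if_pos hcond, add_zero]
        · rw [if_neg (fun h => hcond h.2), if_neg hcond, add_neg_cancel]
    · rw [if_neg (fun h => hfI h.1)]
      convert hempty using 2
      rw [eq_empty_iff_forall_notMem]
      rintro p ⟨hp, ⟨hpP, hpU⟩, hpn⟩
      rw [mem_fc_iff hf] at hfI
      obtain ⟨i, hi, hi'⟩ := Finset.not_subset.1 hfI
      exact (hUlat δ p hpU hpn i hi').ne (hp.1 i hi)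
  have hchiY := IsChi.sum _ hpiece
  have hYeq : (fun p => ∑ I ∈ strata y c, ind (st y c I ∩ Y) p) = ind Y := by
    ext p; exact (ind_sum_strata hYP p).symm
  rw [hYeq] at hchiY
  rw [Finset.sum_filter]
  apply halfopen_zero hchiY n b hnb
  intro z hz
  have hzn : ∀ t : ℝ, ⟪n, z + t • b⟫ = t := by
    intro t; rw [inner_add_right, inner_smul_right, hz, hnb]; ring
  have hzw : ∀ i (t : ℝ), ⟪w i, z + t • b⟫ = ⟪w i, z⟫ := by
    intro i t; rw [inner_add_right, inner_smul_right, hwb]; ring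
  by_cases hS : ∃ t : ℝ, z + t • b ∈ Y
  swap
  · refine ⟨0, 0, le_rfl, fun t => ?_⟩
    simp only [Ico_self, mem_empty_iff_false, iff_false]
    exact fun h => hS ⟨t, h⟩
  let S : Set ℝ := {t | z + t • b ∈ Y}
  have hSne : S.Nonempty := hS
  have hSlow : ∀ t ∈ S, τ - δ ≤ t := fun t ht => by
    have : τ - δ ≤ ⟪n, z + t • b⟫ := ht.2
    rwa [hzn] at this
  have hSup : ∀ t ∈ S, t < τ + δ := fun t ht => by
    have := ((hUmem _ _).1 ht.1.2).1
    rwa [hzn] at this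
  have hSbb : BddBelow S := ⟨_, hSlow⟩
  have hlat : ∀ i, i ∉ act y c f →
      ⟪w i, z⟫ + (τ + δ) * ⟪b, y i⟫ < c i ∧ ⟪w i, z⟫ + (τ - δ) * ⟪b, y i⟫ < c i := by
    obtain ⟨t, ht⟩ := hS
    have := ((hUmem _ _).1 ht.1.2).2
    simpa only [hzw] using this
  have hmk : ∀ t, z + t • b ∈ poly y c → τ - δ ≤ t → t < τ + δ → z + t • b ∈ Y := by
    intro t h1 h2 h3
    refine ⟨⟨h1, ?_⟩, ?_⟩
    · rw [hUmem]
      simp only [hzw, hzn]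
      exact ⟨h3, hlat⟩
    · simp only [mem_ofPred_eq, hzn]; exact h2
  have hαS : sInf S ∈ S := by
    have hcl : IsClosed {t : ℝ | z + t • b ∈ poly y c} :=
      poly_closed.preimage (by fun_prop)
    have h1 : sInf S ∈ {t : ℝ | z + t • b ∈ poly y c} :=
      hcl.closure_subset_iff.2 (fun t ht => ht.1.1) (csInf_mem_closure hSne hSbb)
    refine hmk _ h1 (le_csInf hSne hSlow) ?_
    obtain ⟨t, ht⟩ := hS
    exact lt_of_le_of_lt (csInf_le hSbb ht) (hSup t ht)
  refine ⟨sInf S, τ + δ, (hSup _ hαS).le, fun t => ⟨fun ht => ⟨csInf_le hSbb ht, hSup t ht⟩, ?_⟩⟩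
  rintro ⟨h1, h2⟩
  have h3 : τ - δ ≤ t := (hSlow _ hαS).trans h1
  refine hmk t ?_ h3 h2
  intro i
  by_cases hi : i ∈ act y c f
  · have e1 : ⟪z + sInf S • b, y i⟫ ≤ c i := hαS.1.1 i
    have e2 := hbact i hi
    rw [inner_add_left, inner_smul_left, conj_trivial] at e1 ⊢
    nlinarith
  · rw [hw, hzw, hzn]
    exact (lat_lt (hlat i hi).1 (hlat i hi).2 h3 h2.le).le

end strata

/-! ### Faces, normal cones, assembly -/

section assembly

variable {m : ℕ} {y : Fin m → E d} {c : Fin m → ℝ}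

lemma normalCone_iff {P F : Set (E d)} (hFP : F ⊆ P) (hF : Convex ℝ F) (hne : F.Nonempty) (z : E d) :
    z ∈ normalCone P F ↔ ∀ g ∈ F, ∀ p ∈ P, ⟪z, p - g⟫ ≤ 0 := by
  constructor
  · intro hz g hg p hp
    obtain ⟨f, hf⟩ := hne.intrinsicInterior hF
    have h1 : ⟪z, p - f⟫ ≤ 0 := hz f hf _ ⟨1, one_pos, by simpa using hp⟩
    have h2 : ⟪z, f - g⟫ ≤ 0 := by
      obtain ⟨w, hw, hwf⟩ := mem_intrinsicInterior.1 hf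
      rw [mem_interior_iff_mem_nhds, mem_nhds_subtype] at hw
      obtain ⟨u, hu, huF⟩ := hw
      rw [hwf] at hu
      have hc : Continuous fun s : ℝ => f + s • (f - g) := by fun_prop
      have h3 : ∀ᶠ s : ℝ in nhds 0, f + s • (f - g) ∈ u := by
        apply hc.continuousAt.eventually_mem
        simpa using hu
      obtain ⟨s, hs, hs0⟩ := ((h3.filter_mono nhdsWithin_le_nhds).and
        (self_mem_nhdsWithin : Set.Ioi (0 : ℝ) ∈ nhdsWithin 0 (Set.Ioi 0))).exists
      have hmem : f + s • (f - g) ∈ affineSpan ℝ F := by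
        have hfA : f ∈ affineSpan ℝ F := hwf ▸ w.2
        have hgA : g ∈ affineSpan ℝ F := subset_affineSpan ℝ F hg
        have := AffineMap.lineMap_mem (-s) hfA hgA
        have e : AffineMap.lineMap f g (-s) = f + s • (f - g) := by
          rw [AffineMap.lineMap_apply]
          simp only [vsub_eq_sub, vadd_eq_add]
          module
        rwa [e] at this
      have h4 : f + s • (f - g) ∈ F := @huF ⟨_, hmem⟩ hs
      exact hz f hf _ ⟨s, hs0, hFP h4⟩
    have e : p - g = (p - f) + (f - g) := by abel
    rw [e, inner_add_right]
    linarith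
  · intro h f hf u ⟨δ, hδ, hu⟩
    have := h f (intrinsicInterior_subset hf) _ hu
    rw [add_sub_cancel_left, inner_smul_right] at this
    by_contra h5
    push Not at h5
    have := mul_pos hδ h5
    linarith

lemma fc_nonempty {I : Finset (Fin m)} (hI : I ∈ strata y c) : (fc y c I).Nonempty := by
  simp only [strata, Finset.mem_filter, Finset.mem_univ, true_and] at hI
  exact hI.mono (st_subset_fc I)

lemma fc_injOn : Set.InjOn (fc y c) (strata y c : Set (Finset (Fin m))) := by
  have key : ∀ I J : Finset (Fin m), I ∈ strata y c → fc y c I = fc y c J → J ⊆ I := by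
    intro I J hI h
    simp only [strata, Finset.mem_filter, Finset.mem_univ, true_and] at hI
    obtain ⟨p, hp⟩ := hI
    have h1 := st_subset_fc I hp
    have h2 := h1
    rw [h, mem_fc_iff h1.1, act_of_mem_st hp] at h2
    exact h2
  intro I hI J hJ h
  exact Finset.Subset.antisymm (key J I hJ h.symm) (key I J hI h)

lemma sdim_fc {I : Finset (Fin m)} (hI : I ∈ strata y c) :
    sdim (fc y c I) = Module.finrank ℝ (Vs y I) := by
  simp only [strata, Finset.mem_filter, Finset.mem_univ, true_and] at hI
  obtain ⟨p, hp⟩ := hI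
  have : (affineSpan ℝ (fc y c I)).direction = Vs y I := by
    rw [direction_affineSpan]
    apply le_antisymm
    · rw [vectorSpan_def, Submodule.span_le]
      rintro v ⟨a, ha, b, hb, rfl⟩ i hi
      simp only [vsub_eq_sub]
      rw [inner_sub_left, ha.2 i hi, hb.2 i hi, sub_self]
    · intro v hv
      have h3 := (st_relOpen I).2 p hp v hv
      obtain ⟨s, hs, hs0⟩ := ((h3.filter_mono nhdsWithin_le_nhds).and
        (self_mem_nhdsWithin : Set.Ioi (0 : ℝ) ∈ nhdsWithin 0 (Set.Ioi 0))).exists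
      have h4 := vsub_mem_vectorSpan ℝ (st_subset_fc I hs) (st_subset_fc I hp)
      simp only [vsub_eq_sub, add_sub_cancel_left] at h4
      exact (Submodule.smul_mem_iff _ (ne_of_gt hs0)).1 h4
  rw [sdim, this]

lemma face_fc (I : Finset (Fin m)) : IsFaceOf (poly y c) (fc y c I) := by
  right
  refine ⟨∑ i ∈ I, y i, ∑ i ∈ I, c i, ?_, ?_⟩
  · intro z hz
    rw [sum_inner]
    refine Finset.sum_le_sum fun i _ => ?_
    rw [real_inner_comm]
    exact hz i
  · ext z
    simp only [fc, mem_ofPred_eq]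
    refine and_congr_right fun hz => ?_
    rw [sum_inner, Finset.sum_eq_sum_iff_of_le]
    · simp only [real_inner_comm]
    · intro i _
      rw [real_inner_comm]
      exact hz i

lemma face_exists {F : Set (E d)} (hF : IsFaceOf (poly y c) F) (hne : F.Nonempty) :
    ∃ I ∈ strata y c, F = fc y c I := by
  obtain ⟨w, b, hw, hFe⟩ : ∃ (w : E d) (b : ℝ), (∀ z ∈ poly y c, ⟪w, z⟫ ≤ b) ∧
      F = {z | z ∈ poly y c ∧ ⟪w, z⟫ = b} := by
    rcases hF with h | h
    · exact ⟨0, 0, by simp, by simp [h]⟩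
    · exact h
  obtain ⟨p, hp, hmin⟩ : ∃ p ∈ F, ∀ g ∈ F, (act y c p).card ≤ (act y c g).card := by
    have hne2 : ((fun p => (act y c p).card) '' F).Nonempty := hne.image _
    obtain ⟨p, hp, h⟩ := Nat.sInf_mem hne2
    refine ⟨p, hp, fun g hg => ?_⟩
    rw [show (act y c p).card = _ from h]
    exact Nat.sInf_le ⟨g, hg, rfl⟩
  have hp' := hp
  rw [hFe] at hp'
  have hsub : ∀ g ∈ F, act y c p ⊆ act y c g := by
    intro g hg
    have hg' := hg
    rw [hFe] at hg'
    set q : E d := (1 / 2 : ℝ) • p + (1 / 2 : ℝ) • g with hq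
    have hqP : q ∈ poly y c := poly_convex hp'.1 hg'.1 (by norm_num) (by norm_num) (by norm_num)
    have hqF : q ∈ F := by
      rw [hFe]
      refine ⟨hqP, ?_⟩
      rw [hq, inner_add_right, inner_smul_right, inner_smul_right, hp'.2, hg'.2]
      ring
    have hqa : ∀ i ∈ act y c q, i ∈ act y c p ∧ i ∈ act y c g := by
      intro i hi
      simp only [act, Finset.mem_filter, Finset.mem_univ, true_and] at hi ⊢
      rw [hq, inner_add_left, real_inner_smul_left, real_inner_smul_left] at hi
      have h1 := hp'.1 i
      have h2 := hg'.1 i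
      constructor <;> linarith
    have he : act y c q = act y c p :=
      Finset.eq_of_subset_of_card_le (fun i hi => (hqa i hi).1) (hmin q hqF)
    intro i hi
    exact (hqa i (he ▸ hi)).2
  have hst := mem_st_act hp'.1
  refine ⟨act y c p, ?_, ?_⟩
  · simp only [strata, Finset.mem_filter, Finset.mem_univ, true_and]
    exact ⟨p, hst⟩
  · apply Set.Subset.antisymm
    · intro g hg
      have hg' := hg
      rw [hFe] at hg'
      exact (mem_fc_iff hg'.1).2 (hsub g hg)
    · intro g hg
      rw [hFe]
      refine ⟨hg.1, le_antisymm (hw g hg.1) ?_⟩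
      have hv : p - g ∈ Vs y (act y c p) := by
        intro i hi
        rw [inner_sub_left, hst.1 i hi, hg.2 i hi, sub_self]
      have h3 := (st_relOpen (act y c p)).2 p hst _ hv
      obtain ⟨s, hs, hs0⟩ := ((h3.filter_mono nhdsWithin_le_nhds).and
        (self_mem_nhdsWithin : Set.Ioi (0 : ℝ) ∈ nhdsWithin 0 (Set.Ioi 0))).exists
      have h4 := hw _ (st_subset_fc _ hs).1
      rw [inner_add_right, inner_smul_right, inner_sub_right, hp'.2] at h4
      have hs1 : 0 < s := hs0
      by_contra h5
      push Not at h5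
      have := mul_pos hs1 (sub_pos.2 h5)
      linarith

/-- `f` is the nearest point of the face `I` to `x`. -/
def near (y : Fin m → E d) (c : Fin m → ℝ) (x : E d) (I : Finset (Fin m)) (f : E d) : Prop :=
  f ∈ fc y c I ∧ ∀ g ∈ fc y c I, 0 ≤ ⟪f - x, g - f⟫

lemma near_exists (x : E d) {I : Finset (Fin m)} (hI : I ∈ strata y c) :
    ∃ f, near y c x I f := by
  obtain ⟨f, hf, h⟩ := exists_norm_eq_iInf_of_complete_convex (fc_nonempty hI)
    (fc_closed I).isComplete (fc_convex I) x
  refine ⟨f, hf, fun g hg => ?_⟩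
  have := (norm_eq_iInf_iff_real_inner_le_zero (fc_convex I) hf).1 h g hg
  rw [← neg_sub x f, inner_neg_left]
  linarith

lemma near_unique {x : E d} {I : Finset (Fin m)} {f g : E d} (hf : near y c x I f)
    (hg : near y c x I g) : f = g := by
  have h1 := hf.2 g hg.1
  have h2 := hg.2 f hf.1
  have e1 : ⟪f - x, g - f⟫ + ⟪g - x, f - g⟫ = - ⟪f - g, f - g⟫ := by
    rw [← neg_sub f g, inner_neg_right, ← sub_add_sub_cancel f g x, inner_add_left]
    ring
  have h3 : ⟪f - g, f - g⟫ ≤ 0 := by linarith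
  have h4 : f - g = 0 := by
    rw [← inner_self_eq_zero (𝕜 := ℝ)]
    exact le_antisymm h3 real_inner_self_nonneg
  exact sub_eq_zero.1 h4

lemma cond_iff {x : E d} {I : Finset (Fin m)} {f : E d} (hI : I ∈ strata y c)
    (hf : near y c x I f) :
    x ∈ fc y c I - normalCone (poly y c) (fc y c I) ↔ ∀ p ∈ poly y c, ⟪f - x, p - f⟫ ≤ 0 := by
  have hN := normalCone_iff (P := poly y c) (F := fc y c I) (fun _ h => h.1) (fc_convex I)
    (fc_nonempty hI)
  constructor
  · intro h
    obtain ⟨f', hf', n, hn, hx⟩ := Set.mem_sub.1 h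
    rw [hN] at hn
    have hnx : n = f' - x := by rw [← hx]; abel
    have hnear : near y c x I f' := by
      refine ⟨hf', fun g hg => ?_⟩
      have := hn g hg f' hf'.1
      rw [← neg_sub g f', inner_neg_right, hnx] at this
      linarith
    have := near_unique hf hnear
    subst this
    intro p hp
    have := hn f hf' p hp
    rwa [hnx] at this
  · intro h
    refine Set.mem_sub.2 ⟨f, hf.1, f - x, ?_, by abel⟩
    rw [hN]
    intro g hg p hp
    have h1 := h p hp
    have h2 := hf.2 g hg
    have e : p - g = (p - f) - (g - f) := by abel
    rw [e, inner_sub_right]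
    linarith

lemma main_sum (hc : IsCompact (poly y c)) (hne : (poly y c).Nonempty) (x : E d) :
    ∑ I ∈ strata y c with x ∈ fc y c I - normalCone (poly y c) (fc y c I),
      (-1 : ℤ) ^ Module.finrank ℝ (Vs y I) = 1 := by
  have hex : ∀ I : Finset (Fin m), ∃ f, I ∈ strata y c → near y c x I f := by
    intro I
    by_cases hI : I ∈ strata y c
    · obtain ⟨f, hf⟩ := near_exists x hI
      exact ⟨f, fun _ => hf⟩
    · exact ⟨0, fun h => absurd h hI⟩
  choose π hπ using hex
  have hsplit := Finset.sum_filter_add_sum_filter_not (strata y c)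
    (fun I => x ∈ fc y c I - normalCone (poly y c) (fc y c I))
    (fun I => (-1 : ℤ) ^ Module.finrank ℝ (Vs y I))
  rw [poly_euler hc hne] at hsplit
  have hz : ∑ I ∈ strata y c with ¬ (x ∈ fc y c I - normalCone (poly y c) (fc y c I)),
      (-1 : ℤ) ^ Module.finrank ℝ (Vs y I) = 0 := by
    set S := (strata y c).filter
      (fun I => ¬ (x ∈ fc y c I - normalCone (poly y c) (fc y c I))) with hS
    rw [← Finset.sum_fiberwise_of_maps_to (s := S) (t := S.image π) (g := π)
      (fun I hI => Finset.mem_image_of_mem π hI)]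
    refine Finset.sum_eq_zero fun f hf => ?_
    obtain ⟨J, hJ, hJf⟩ := Finset.mem_image.1 hf
    rw [hS, Finset.mem_filter] at hJ
    have hnJ := hπ J hJ.1
    rw [hJf] at hnJ
    have hq := hJ.2
    rw [cond_iff hJ.1 hnJ] at hq
    have hq0 := hq
    push Not at hq
    obtain ⟨q, hqP, hq⟩ := hq
    rw [← local_zero hc hnJ.1.1 hqP hq]
    refine Finset.sum_congr ?_ fun _ _ => rfl
    ext I
    simp only [hS, Finset.mem_filter]
    constructor
    · rintro ⟨⟨hI, _⟩, hIf⟩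
      have := hπ I hI
      rw [hIf] at this
      exact ⟨hI, this⟩
    · rintro ⟨hI, hn⟩
      have hn' : near y c x I f := hn
      exact ⟨⟨hI, by rw [cond_iff hI hn']; exact hq0⟩, near_unique (hπ I hI) hn'⟩
  rw [hz, add_zero] at hsplit
  exact hsplit

lemma faces_set (x : E d) (k : ℕ) :
    {F : Set (E d) | F ∈ facesOfDim (poly y c) k ∧ x ∈ F - normalCone (poly y c) F} =
    fc y c '' (((strata y c).filter
      (fun I => x ∈ fc y c I - normalCone (poly y c) (fc y c I))).filter
        (fun I => Module.finrank ℝ (Vs y I) = k) : Finset (Finset (Fin m))) := by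
  ext F
  simp only [facesOfDim, mem_ofPred_eq, Set.mem_image, Finset.mem_coe, Finset.mem_filter]
  constructor
  · rintro ⟨⟨hF, hne, hd⟩, hx⟩
    obtain ⟨I, hI, rfl⟩ := face_exists hF hne
    exact ⟨I, ⟨⟨hI, hx⟩, by rw [← sdim_fc hI, hd]⟩, rfl⟩
  · rintro ⟨I, ⟨⟨hI, hx⟩, hd⟩, rfl⟩
    exact ⟨⟨face_fc I, fc_nonempty hI, by rw [sdim_fc hI, hd]⟩, hx⟩

end assembly

/-- McMullen-type identity for polytopes:
`Σ_k (-1)^k Σ_{F ∈ F_k(P)} 1_{F - N_F(P)}(x) = 1` for all `x`. -/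
theorem stmt12 {d : ℕ} {P : Set (E d)} (hP : IsPolyhedron P) (hne : P.Nonempty)
    (hbd : Bornology.IsBounded P) (x : E d) :
    ∑ k ∈ Finset.range (d + 1), (-1 : ℤ) ^ k *
        (Set.ncard {F : Set (E d) | F ∈ facesOfDim P k ∧ x ∈ F - normalCone P F} : ℤ)
      = 1 := by
  obtain ⟨m, y, c, hPe⟩ := hP
  have hPp : P = poly y c := hPe
  clear hPe
  subst hPp
  have hc : IsCompact (poly y c) := Metric.isCompact_of_isClosed_isBounded poly_closed hbd
  refine Eq.trans ?_ (main_sum hc hne x)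
  rw [← Finset.sum_fiberwise_of_maps_to (t := Finset.range (d + 1))
    (g := fun I => Module.finrank ℝ (Vs y I))]
  · refine Finset.sum_congr rfl fun k _ => ?_
    rw [faces_set, Set.InjOn.ncard_image, Set.ncard_coe_finset]
    · refine Eq.trans ?_ (Finset.sum_congr rfl (f := fun _ => (-1 : ℤ) ^ k) ?_)
      · rw [Finset.sum_const, nsmul_eq_mul, mul_comm]
      · intro I hI
        rw [(Finset.mem_filter.1 hI).2]
    · refine fc_injOn.mono ?_
      intro I hI
      exact (Finset.mem_filter.1 (Finset.mem_filter.1 hI).1).1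
  · intro I _
    have h := Submodule.finrank_le (Vs y I)
    rw [finrank_euclideanSpace_fin] at h
    exact Finset.mem_range.2 (Nat.lt_succ_of_le h)
end
end
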